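/- arXiv:1012.1838 — 2 statements merged into one kernel-verified Lean document; each statement's English description precedes it below -/
import Mathlib

section
/- Let K be a field with at least 13 elements and S a smooth cubic surface in P^3 over K. Let ℓ be a K-line contained in S and let P ∈ ℓ(K) be a point that is not an Eckardt point. Then ℓ(K) ⊆ Γ_P(K) ⊆ Span({P}). -/
/- Common framework: points, lines, intersection divisors, the secant-tangent span,
the groups `H_S(K)`, geometric notions over the algebraic closure, and topologies. -/

open MvPolynomial

noncomputable section

namespace CubicSurf

variable {K L : Type*} [Field K] [Field L] {n : ℕ}

/-- The set of `K`-rational points of the projective hypersurface `F = 0`. -/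
def zeroSet (F : MvPolynomial (Fin n) K) : Set (Projectivization K (Fin n → K)) :=
  {P | eval P.rep F = 0}

/-- The binary form obtained by restricting `F` to the line spanned by `u` and `v`,
via the parametrization `(s : t) ↦ s • u + t • v`. -/
def lineRestrict (F : MvPolynomial (Fin n) K) (u v : Fin n → K) : MvPolynomial (Fin 2) K :=
  aeval (fun i => C (u i) * X 0 + C (v i) * X 1) F

/-- A projective line: a 2-dimensional linear subspace of `K^n`. -/
def IsLine (W : Submodule K (Fin n → K)) : Prop := Module.finrank K W = 2

/-- The line `W` lies (geometrically) on the hypersurface `F = 0`. -/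
def LineOnSurf (F : MvPolynomial (Fin n) K) (W : Submodule K (Fin n → K)) : Prop :=
  ∀ u v : Fin n → K, u ∈ W → v ∈ W → lineRestrict F u v = 0

/-- The projective point `P` lies on the line `W`. -/
def OnLine (W : Submodule K (Fin n → K)) (P : Projectivization K (Fin n → K)) : Prop :=
  P.rep ∈ W

/-- The set of `K`-points of the line `W`. -/
def linePts (W : Submodule K (Fin n → K)) : Set (Projectivization K (Fin n → K)) :=
  {P | OnLine W P}

/-- `ℓ · S = P + Q + R`: the intersection divisor (with multiplicities) of the line `W`
with the hypersurface `F = 0` is `P + Q + R`. -/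
def MeetsIn (F : MvPolynomial (Fin n) K) (W : Submodule K (Fin n → K))
    (P Q R : Projectivization K (Fin n → K)) : Prop :=
  ∃ (u v : Fin n → K) (_ : u ∈ W) (_ : v ∈ W) (_ : LinearIndependent K ![u, v])
    (c : K) (l m : Fin 3 → K) (h : ∀ k, l k • u + m k • v ≠ 0),
      c ≠ 0 ∧
      lineRestrict F u v = C c * ∏ k : Fin 3, (C (m k) * X 0 - C (l k) * X 1) ∧
      Projectivization.mk K _ (h 0) = P ∧
      Projectivization.mk K _ (h 1) = Q ∧
      Projectivization.mk K _ (h 2) = R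

/-- Membership in the span of a set of points under the secant/tangent process:
the smallest subset of `S(K)` containing `B` such that whenever `P`, `Q` are in it and a
`K`-line `ℓ ⊄ S` satisfies `ℓ·S = P+Q+R` with `R ∈ S(K)`, then `R` is in it. -/
inductive SpanMem (F : MvPolynomial (Fin n) K) (B : Set (Projectivization K (Fin n → K))) :
    Projectivization K (Fin n → K) → Prop
  | base (P : Projectivization K (Fin n → K)) (hP : P ∈ B) : SpanMem F B P
  | secant (P Q R : Projectivization K (Fin n → K)) (W : Submodule K (Fin n → K))
      (hW : IsLine W) (hWS : ¬ LineOnSurf F W) (hP : SpanMem F B P) (hQ : SpanMem F B Q)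
      (hR : R ∈ zeroSet F) (hm : MeetsIn F W P Q R) : SpanMem F B R

/-- The span of a set of points under the secant/tangent process. -/
def Span (F : MvPolynomial (Fin n) K) (B : Set (Projectivization K (Fin n → K))) :
    Set (Projectivization K (Fin n → K)) :=
  {P | SpanMem F B P}

/-- Smoothness of the projective hypersurface `F = 0`: over the algebraic closure there is
no nonzero common zero of `F` and all of its partial derivatives. -/
def IsSmoothHypersurf (F : MvPolynomial (Fin n) K) : Prop :=
  ∀ v : Fin n → AlgebraicClosure K,
    eval v (MvPolynomial.map (algebraMap K (AlgebraicClosure K)) F) = 0 →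
    (∀ i, eval v (pderiv i (MvPolynomial.map (algebraMap K (AlgebraicClosure K)) F)) = 0) →
    v = 0

/-- A smooth cubic hypersurface. -/
def SmoothCubic (F : MvPolynomial (Fin n) K) : Prop :=
  F.IsHomogeneous 3 ∧ IsSmoothHypersurf F

/-- The linear form cutting out the tangent plane `Π_P` of `F = 0` at `P`,
evaluated at the representative of a point `Q`; `Q ∈ Π_P` iff this vanishes. -/
def tangentEval (F : MvPolynomial (Fin n) K) (P Q : Projectivization K (Fin n → K)) : K :=
  ∑ i, eval P.rep (pderiv i F) * Q.rep i

/-- The set of `K`-points of the tangent plane `Π_P`. -/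
def tangentPlanePts (F : MvPolynomial (Fin n) K) (P : Projectivization K (Fin n → K)) :
    Set (Projectivization K (Fin n → K)) :=
  {Q | tangentEval F P Q = 0}

/-- The set of `K`-points of `Γ_P = S ∩ Π_P`. -/
def GammaPts (F : MvPolynomial (Fin n) K) (P : Projectivization K (Fin n → K)) :
    Set (Projectivization K (Fin n → K)) :=
  zeroSet F ∩ tangentPlanePts F P

/-! ### Base change along a field embedding -/

/-- Base change of a vector along a field embedding. -/
def clVec (φ : K →+* L) (v : Fin n → K) : Fin n → L := fun i => φ (v i)

lemma clVec_ne_zero (φ : K →+* L) {v : Fin n → K} (hv : v ≠ 0) : clVec φ v ≠ 0 := by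
  intro h
  apply hv
  funext i
  have := congrFun h i
  simpa [clVec] using φ.injective (by simpa [clVec] using this)

/-- Base change of a projective point along a field embedding. -/
def clPt (φ : K →+* L) (P : Projectivization K (Fin n → K)) :
    Projectivization L (Fin n → L) :=
  Projectivization.mk L (clVec φ P.rep) (clVec_ne_zero φ P.rep_nonzero)

lemma eval_smul_of_isHomogeneous {R : Type*} [CommSemiring R] {F : MvPolynomial (Fin n) R}
    {d : ℕ} (hF : F.IsHomogeneous d) (a : R) (w : Fin n → R) :
    eval (a • w) F = a ^ d * eval w F := by
  classical
  rw [eval_eq', eval_eq', Finset.mul_sum]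
  refine Finset.sum_congr rfl fun s hs => ?_
  have hdeg : ∑ i, s i = d := by
    have h1 := hF (MvPolynomial.mem_support_iff.mp hs)
    rw [Finsupp.weight_apply] at h1
    rw [← h1, Finsupp.sum_fintype]
    · simp
    · intro i; simp
  have key : ∀ i : Fin n, (a • w) i ^ s i = a ^ s i * w i ^ s i := by
    intro i; simp [mul_pow]
  rw [Finset.prod_congr rfl (fun i _ => key i), Finset.prod_mul_distrib,
    Finset.prod_pow_eq_pow_sum, hdeg]
  ring

lemma clVec_eval (φ : K →+* L) (F : MvPolynomial (Fin n) K) (v : Fin n → K) :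
    eval (clVec φ v) (MvPolynomial.map φ F) = φ (eval v F) := by
  rw [eval_map]
  have h : φ (eval v F) = φ (eval₂Hom (RingHom.id K) v F) := rfl
  rw [h, map_eval₂Hom]
  rfl

/-- A point given by a vector on which a homogeneous `F` vanishes lies in the zero set. -/
lemma mk_mem_zeroSet {F : MvPolynomial (Fin n) K} {d : ℕ} (hF : F.IsHomogeneous d)
    {v : Fin n → K} (hv : v ≠ 0) (h : eval v F = 0) :
    Projectivization.mk K v hv ∈ zeroSet F := by
  obtain ⟨a, ha⟩ := Projectivization.exists_smul_eq_mk_rep K v hv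
  show eval (Projectivization.mk K v hv).rep F = 0
  have hrep : (Projectivization.mk K v hv).rep = (a : K) • v := by
    rw [← ha, Units.smul_def]
  rw [hrep, eval_smul_of_isHomogeneous hF, h, mul_zero]

lemma clPt_mem_zeroSet (φ : K →+* L) {F : MvPolynomial (Fin n) K} {d : ℕ}
    (hF : F.IsHomogeneous d) {P : Projectivization K (Fin n → K)} (hP : P ∈ zeroSet F) :
    clPt φ P ∈ zeroSet (MvPolynomial.map φ F) := by
  apply mk_mem_zeroSet (hF.map φ)
  rw [clVec_eval, hP, map_zero]

/-- The induced map on points of `S` under base change of the field. -/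
def ptMap (φ : K →+* L) {F : MvPolynomial (Fin n) K} {d : ℕ} (hF : F.IsHomogeneous d)
    (P : zeroSet F) : zeroSet (MvPolynomial.map φ F) :=
  ⟨clPt φ P.1, clPt_mem_zeroSet φ hF P.2⟩

/-- A subspace of `L^n` is defined over `K` (w.r.t. `φ : K →+* L`) if it is spanned by
the base change of a `K`-subspace. -/
def DefinedOver (φ : K →+* L) (W : Submodule L (Fin n → L)) : Prop :=
  ∃ W₀ : Submodule K (Fin n → K), W = Submodule.span L (clVec φ '' (W₀ : Set (Fin n → K)))

/-! ### Asymptotic lines, parabolic points, Eckardt points -/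

/-- The line `W` is asymptotic to `F = 0` at `P`: the intersection multiplicity
`(ℓ · S)_P` is at least 3. -/
def AsymptoticAt (F : MvPolynomial (Fin n) K) (W : Submodule K (Fin n → K))
    (P : Projectivization K (Fin n → K)) : Prop :=
  IsLine W ∧ P.rep ∈ W ∧
    ∃ v ∈ W, LinearIndependent K ![P.rep, v] ∧
      ∃ c : K, lineRestrict F P.rep v = C c * (X 1) ^ 3

/-- The set of asymptotic lines at `P`. -/
def AsymSet (F : MvPolynomial (Fin n) K) (P : Projectivization K (Fin n → K)) :
    Set (Submodule K (Fin n → K)) :=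
  {W | AsymptoticAt F W P}

/-- A point of a hypersurface is parabolic (relative to the given field) if it does
not have exactly two distinct asymptotic lines (i.e. it has one or infinitely many). -/
def ParabolicAt (F : MvPolynomial (Fin n) K) (P : Projectivization K (Fin n → K)) : Prop :=
  ¬ ∃ W₁ W₂ : Submodule K (Fin n → K), W₁ ≠ W₂ ∧ AsymSet F P = {W₁, W₂}

/-- An Eckardt point (relative to the given field): three distinct lines lying on the
surface pass through `P`. -/
def EckardtAt (F : MvPolynomial (Fin n) K) (P : Projectivization K (Fin n → K)) : Prop :=
  ∃ W₁ W₂ W₃ : Submodule K (Fin n → K), W₁ ≠ W₂ ∧ W₁ ≠ W₃ ∧ W₂ ≠ W₃ ∧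
    (∀ W ∈ ({W₁, W₂, W₃} : Set (Submodule K (Fin n → K))),
      IsLine W ∧ LineOnSurf F W ∧ OnLine W P)

section geometric

variable (F : MvPolynomial (Fin n) K)

/-- `F` base changed to the algebraic closure of `K`. -/
def clF : MvPolynomial (Fin n) (AlgebraicClosure K) :=
  MvPolynomial.map (algebraMap K (AlgebraicClosure K)) F

/-- A `K`-point of `S` is parabolic (a geometric notion, checked over `K̄`). -/
def IsParabolic (P : Projectivization K (Fin n → K)) : Prop :=
  ParabolicAt (clF F) (clPt (algebraMap K (AlgebraicClosure K)) P)

/-- A `K`-point of `S` is an Eckardt point (a geometric notion, checked over `K̄`). -/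
def IsEckardt (P : Projectivization K (Fin n → K)) : Prop :=
  EckardtAt (clF F) (clPt (algebraMap K (AlgebraicClosure K)) P)

/-- A `K`-point of `S` is `K`-hyperbolic: it has exactly two asymptotic lines over `K̄`,
and both are defined over `K`. -/
def IsHyperbolic (P : Projectivization K (Fin n → K)) : Prop :=
  ∃ W₁ W₂, W₁ ≠ W₂ ∧
    AsymSet (clF F) (clPt (algebraMap K (AlgebraicClosure K)) P) = {W₁, W₂} ∧
    DefinedOver (algebraMap K (AlgebraicClosure K)) W₁ ∧
    DefinedOver (algebraMap K (AlgebraicClosure K)) W₂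

/-- A `K`-point of `S` is `K`-ternary: at least one of the asymptotic lines of `S`
through `P` is defined over `K`. -/
def IsTernary (P : Projectivization K (Fin n → K)) : Prop :=
  ∃ W ∈ AsymSet (clF F) (clPt (algebraMap K (AlgebraicClosure K)) P),
    DefinedOver (algebraMap K (AlgebraicClosure K)) W

end geometric

/-! ### The group `H_S(K)` -/

variable (F : MvPolynomial (Fin n) K)

/-- `G_S(K)`: the free abelian group on the set `S(K)`. -/
abbrev GS := FreeAbelianGroup (zeroSet F)

/-- The degree homomorphism `G_S(K) → ℤ`, `Σ aᵢ Pᵢ ↦ Σ aᵢ`. -/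
def degHom : GS F →+ ℤ := FreeAbelianGroup.lift fun _ => (1 : ℤ)

/-- `P + Q + R` is a "three point sum": either cut out on `S` with multiplicity by a
`K`-line not contained in `S`, or `P`, `Q`, `R` all lie on a `K`-line contained in `S`. -/
def TripleRel (P Q R : zeroSet F) : Prop :=
  ∃ W : Submodule K (Fin n → K), IsLine W ∧
    ((¬ LineOnSurf F W ∧ MeetsIn F W P.1 Q.1 R.1) ∨
      (LineOnSurf F W ∧ OnLine W P.1 ∧ OnLine W Q.1 ∧ OnLine W R.1))

/-- `G'_S(K)`: the subgroup generated by all three point sums. -/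
def Gp : AddSubgroup (GS F) :=
  AddSubgroup.closure {x | ∃ P Q R : zeroSet F, TripleRel F P Q R ∧
    x = FreeAbelianGroup.of P + FreeAbelianGroup.of Q + FreeAbelianGroup.of R}

/-- `G''_S(K)`: the degree-0 part of `G'_S(K)`. -/
def Gpp : AddSubgroup (GS F) := Gp F ⊓ (degHom F).ker

/-- `H_S(K) = G_S(K)/G''_S(K)`. -/
abbrev HS := GS F ⧸ Gpp F

/-- The class `[P] ∈ H_S(K)` of a point `P ∈ S(K)`. -/
def HClass (P : zeroSet F) : HS F := QuotientAddGroup.mk' (Gpp F) (FreeAbelianGroup.of P)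

/-- The degree homomorphism `H_S(K) → ℤ`. -/
def HdegHom : HS F →+ ℤ :=
  QuotientAddGroup.lift (Gpp F) (degHom F) (fun _ hx => hx.2)

/-- `H⁰_S(K)`: the degree-0 part of `H_S(K)`. -/
def H0 : AddSubgroup (HS F) := (HdegHom F).ker

@[simp] lemma HdegHom_HClass (P : zeroSet F) : HdegHom F (HClass F P) = 1 := by
  simp [HdegHom, HClass, degHom]

/-- The class `[P] - [Q]`, as an element of `H⁰_S(K)`. -/
def H0diff (P Q : zeroSet F) : H0 F :=
  ⟨HClass F P - HClass F Q, by simp [H0, AddMonoidHom.mem_ker, map_sub]⟩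

/-! ### mod-`p` dimensions and torsion -/

/-- `A/pA` for an abelian group `A`. -/
abbrev ModP (p : ℕ) (A : Type*) [AddCommGroup A] : Type _ :=
  A ⧸ (AddMonoidHom.range (nsmulAddMonoidHom p : A →+ A))

instance ModP.instModule (p : ℕ) (A : Type*) [AddCommGroup A] : Module (ZMod p) (ModP p A) :=
  QuotientAddGroup.zmodModule (fun x => ⟨x, rfl⟩)

/-- `dim_{F_p} A/pA`. -/
def dimModP (p : ℕ) (A : Type*) [AddCommGroup A] : Cardinal := Module.rank (ZMod p) (ModP p A)

/-- The `k`-torsion subgroup `A[k]` of an abelian group `A`. -/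
def torsion (k : ℕ) (A : Type*) [AddCommGroup A] : AddSubgroup A :=
  (nsmulAddMonoidHom k : A →+ A).ker

instance torsion.instModule (k : ℕ) (A : Type*) [AddCommGroup A] :
    Module (ZMod k) (torsion k A) :=
  AddCommGroup.zmodModule (fun x => Subtype.ext x.2)

/-- `dim_{F_k} A[k]`: the dimension of the `k`-torsion subgroup (for `k` prime). -/
def dimTorsion (k : ℕ) (A : Type*) [AddCommGroup A] : Cardinal :=
  Module.rank (ZMod k) (torsion k A)

/-! ### Topologies -/

/-- The quotient topology on projective space induced by the topology of `K`. -/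
def projTop (K : Type*) [Field K] [TopologicalSpace K] (n : ℕ) :
    TopologicalSpace (Projectivization K (Fin n → K)) :=
  TopologicalSpace.coinduced
    (fun v : {v : Fin n → K // v ≠ 0} => Projectivization.mk K v.1 v.2) inferInstance

/-- The induced topology on the set of `K`-points of `S`. -/
def surfTop (F : MvPolynomial (Fin n) K) [TopologicalSpace K] :
    TopologicalSpace (zeroSet F) :=
  TopologicalSpace.induced Subtype.val (projTop K n)

/-- `K` (a topological field) is a local field: it is isomorphic, as a topological field,
to `ℝ`, to `ℂ`, or to a finite extension of `ℚ_p` for some prime `p` (with its canonical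
topology, namely the `ℚ_p`-vector space topology). -/
def IsLocalField (K : Type*) [Field K] [TopologicalSpace K] : Prop :=
  (∃ e : K ≃+* ℝ, IsHomeomorph e) ∨ (∃ e : K ≃+* ℂ, IsHomeomorph e) ∨
    (∃ (p : ℕ), p.Prime ∧ ∃ (_ : Fact p.Prime) (f : ℚ_[p] →+* K) (m : ℕ)
      (e : K ≃+ (Fin m → ℚ_[p])),
      (∀ (c : ℚ_[p]) (x : K), e (f c * x) = c • e x) ∧ IsHomeomorph e)

end CubicSurf


namespace CubicSurfProof

open CubicSurf MvPolynomial

section basic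

variable {K : Type*} [Field K]

/-- The trilinear form with coefficients `c`. -/
def tri (c : Fin 4 → Fin 4 → Fin 4 → K) (u v w : Fin 4 → K) : K :=
  ∑ i, ∑ j, ∑ k, c i j k * u i * v j * w k

/-- The cubic form with coefficients `c`. -/
def cubF (c : Fin 4 → Fin 4 → Fin 4 → K) : MvPolynomial (Fin 4) K :=
  ∑ i, ∑ j, ∑ k, C (c i j k) * X i * X j * X k

/-- Value of the cubic. -/
def N (c : Fin 4 → Fin 4 → Fin 4 → K) (v : Fin 4 → K) : K := tri c v v v

/-- Directional derivative of the cubic at `v` in direction `d`. -/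
def B (c : Fin 4 → Fin 4 → Fin 4 → K) (v d : Fin 4 → K) : K :=
  tri c d v v + tri c v d v + tri c v v d

/-- Full polarization. -/
def T (c : Fin 4 → Fin 4 → Fin 4 → K) (u v w : Fin 4 → K) : K :=
  tri c u v w + tri c u w v + tri c v u w + tri c v w u + tri c w u v + tri c w v u

variable (c : Fin 4 → Fin 4 → Fin 4 → K)

lemma tri_add1 (u u' v w : Fin 4 → K) : tri c (u + u') v w = tri c u v w + tri c u' v w := by
  simp only [tri, ← Finset.sum_add_distrib, Pi.add_apply]
  refine Finset.sum_congr rfl fun i _ => Finset.sum_congr rfl fun j _ =>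
    Finset.sum_congr rfl fun k _ => by ring
lemma tri_add2 (u v v' w : Fin 4 → K) : tri c u (v + v') w = tri c u v w + tri c u v' w := by
  simp only [tri, ← Finset.sum_add_distrib, Pi.add_apply]
  refine Finset.sum_congr rfl fun i _ => Finset.sum_congr rfl fun j _ =>
    Finset.sum_congr rfl fun k _ => by ring
lemma tri_add3 (u v w w' : Fin 4 → K) : tri c u v (w + w') = tri c u v w + tri c u v w' := by
  simp only [tri, ← Finset.sum_add_distrib, Pi.add_apply]
  refine Finset.sum_congr rfl fun i _ => Finset.sum_congr rfl fun j _ =>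
    Finset.sum_congr rfl fun k _ => by ring
lemma tri_smul1 (a : K) (u v w : Fin 4 → K) : tri c (a • u) v w = a * tri c u v w := by
  simp only [tri, Finset.mul_sum, Pi.smul_apply, smul_eq_mul]
  refine Finset.sum_congr rfl fun i _ => Finset.sum_congr rfl fun j _ =>
    Finset.sum_congr rfl fun k _ => by ring
lemma tri_smul2 (a : K) (u v w : Fin 4 → K) : tri c u (a • v) w = a * tri c u v w := by
  simp only [tri, Finset.mul_sum, Pi.smul_apply, smul_eq_mul]
  refine Finset.sum_congr rfl fun i _ => Finset.sum_congr rfl fun j _ =>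
    Finset.sum_congr rfl fun k _ => by ring
lemma tri_smul3 (a : K) (u v w : Fin 4 → K) : tri c u v (a • w) = a * tri c u v w := by
  simp only [tri, Finset.mul_sum, Pi.smul_apply, smul_eq_mul]
  refine Finset.sum_congr rfl fun i _ => Finset.sum_congr rfl fun j _ =>
    Finset.sum_congr rfl fun k _ => by ring

lemma N_add (u v : Fin 4 → K) : N c (u + v) = N c u + B c u v + B c v u + N c v := by
  simp only [N, B, tri_add1, tri_add2, tri_add3]; ring
lemma N_smul (a : K) (u : Fin 4 → K) : N c (a • u) = a ^ 3 * N c u := by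
  simp only [N, tri_smul1, tri_smul2, tri_smul3]; ring
lemma B_add_left (u v d : Fin 4 → K) : B c (u + v) d = B c u d + T c u v d + B c v d := by
  simp only [T, B, tri_add1, tri_add2, tri_add3]; ring
lemma B_smul_left (a : K) (u d : Fin 4 → K) : B c (a • u) d = a ^ 2 * B c u d := by
  simp only [B, tri_smul1, tri_smul2, tri_smul3]; ring
lemma B_add_right (v d d' : Fin 4 → K) : B c v (d + d') = B c v d + B c v d' := by
  simp only [B, tri_add1, tri_add2, tri_add3]; ring
lemma B_smul_right (a : K) (u d : Fin 4 → K) : B c u (a • d) = a * B c u d := by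
  simp only [B, tri_smul1, tri_smul2, tri_smul3]; ring
lemma T_add1 (u u' v w : Fin 4 → K) : T c (u + u') v w = T c u v w + T c u' v w := by
  simp only [T, tri_add1, tri_add2, tri_add3]; ring
lemma T_smul1 (a : K) (u v w : Fin 4 → K) : T c (a • u) v w = a * T c u v w := by
  simp only [T, tri_smul1, tri_smul2, tri_smul3]; ring
lemma T_comm12 (u v w : Fin 4 → K) : T c u v w = T c v u w := by
  simp only [T]; ring
lemma T_comm23 (u v w : Fin 4 → K) : T c u v w = T c u w v := by
  simp only [T]; ring
lemma T_add2 (u v v' w : Fin 4 → K) : T c u (v + v') w = T c u v w + T c u v' w := by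
  simp only [T, tri_add1, tri_add2, tri_add3]; ring
lemma T_smul2 (a : K) (u v w : Fin 4 → K) : T c u (a • v) w = a * T c u v w := by
  simp only [T, tri_smul1, tri_smul2, tri_smul3]; ring
lemma T_add3 (u v w w' : Fin 4 → K) : T c u v (w + w') = T c u v w + T c u v w' := by
  simp only [T, tri_add1, tri_add2, tri_add3]; ring
lemma T_smul3 (a : K) (u v w : Fin 4 → K) : T c u v (a • w) = a * T c u v w := by
  simp only [T, tri_smul1, tri_smul2, tri_smul3]; ring
lemma T_self12 (u d : Fin 4 → K) : T c u u d = 2 * B c u d := by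
  simp only [T, B]; ring
lemma T_self13 (u d : Fin 4 → K) : T c u d u = 2 * B c u d := by
  simp only [T, B]; ring
lemma T_self23 (u d : Fin 4 → K) : T c d u u = 2 * B c u d := by
  simp only [T, B]; ring
lemma B_self (u : Fin 4 → K) : B c u u = 3 * N c u := by
  simp only [B, N]; ring

lemma eval_cubF (v : Fin 4 → K) : eval v (cubF c) = N c v := by
  simp [cubF, N, tri]

lemma pderiv_cubF (v d : Fin 4 → K) :
    ∑ l, eval v (pderiv l (cubF c)) * d l = B c v d := by
  have h : ∀ i j k : Fin 4, ∑ l, eval v (pderiv l (C (c i j k) * X i * X j * X k)) * d l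
      = c i j k * d i * v j * v k + c i j k * v i * d j * v k + c i j k * v i * v j * d k := by
    intro i j k
    have hp : ∀ l i : Fin 4, eval v (pderiv l (X i : MvPolynomial (Fin 4) K))
        = if i = l then 1 else 0 := by
      intro l i
      rw [pderiv_X]
      by_cases h : i = l
      · subst h; simp
      · simp [h, Pi.single_apply, Ne.symm h]
    simp only [Derivation.leibniz, pderiv_C, smul_eq_mul, map_add, map_mul, eval_X,
      eval_C, add_mul, mul_add, Finset.sum_add_distrib, mul_zero, map_zero, zero_mul, add_zero,
      hp, mul_ite, ite_mul, mul_one, Finset.sum_ite_eq, Finset.mem_univ, if_true]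
    ring
  simp only [cubF, map_sum, Finset.sum_mul]
  rw [Finset.sum_comm]
  simp only [B, tri, ← Finset.sum_add_distrib]
  refine Finset.sum_congr rfl fun i _ => ?_
  rw [Finset.sum_comm]
  refine Finset.sum_congr rfl fun j _ => ?_
  rw [Finset.sum_comm]
  refine Finset.sum_congr rfl fun k _ => ?_
  exact h i j k

lemma lineRestrict_cubF (u v : Fin 4 → K) :
    lineRestrict (cubF c) u v = C (N c u) * X 0 ^ 3 + C (B c u v) * X 0 ^ 2 * X 1
      + C (B c v u) * X 0 * X 1 ^ 2 + C (N c v) * X 1 ^ 3 := by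
  simp only [lineRestrict, cubF, N, B, tri, map_sum, map_add, map_mul, Finset.sum_mul,
    ← Finset.sum_add_distrib, aeval_X, algHom_C, algebraMap_eq]
  refine Finset.sum_congr rfl fun i _ => Finset.sum_congr rfl fun j _ =>
    Finset.sum_congr rfl fun k _ => by ring

lemma binary_eq_zero {a b d e : K} (h : (C a * X 0 ^ 3 + C b * X 0 ^ 2 * X 1
      + C d * X 0 * X 1 ^ 2 + C e * X 1 ^ 3 : MvPolynomial (Fin 2) K) = 0) :
    a = 0 ∧ b = 0 ∧ d = 0 ∧ e = 0 := by
  have h2 := congrArg (aeval (![1, Polynomial.X] : Fin 2 → Polynomial K)) h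
  simp only [map_add, map_mul, map_pow, aeval_X, algHom_C, Matrix.cons_val_zero,
    Matrix.cons_val_one, one_pow, mul_one, map_zero, Polynomial.algebraMap_eq] at h2
  have c0 := congrArg (fun p => Polynomial.coeff p 0) h2
  have c1 := congrArg (fun p => Polynomial.coeff p 1) h2
  have c2 := congrArg (fun p => Polynomial.coeff p 2) h2
  have c3 := congrArg (fun p => Polynomial.coeff p 3) h2
  simp [Polynomial.coeff_X, Polynomial.coeff_C] at c0 c1 c2 c3
  exact ⟨c0, c1, c2, c3⟩

lemma exists_cubF (F : MvPolynomial (Fin 4) K) (hF : F.IsHomogeneous 3) : ∃ c, F = cubF c := by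
  classical
  rw [F.as_sum]
  refine Finset.sum_induction _ (fun G => ∃ c, G = cubF c) ?_ ?_ ?_
  · rintro _ _ ⟨c, rfl⟩ ⟨c', rfl⟩
    refine ⟨fun i j k => c i j k + c' i j k, ?_⟩
    simp only [cubF, ← Finset.sum_add_distrib, map_add, add_mul]
  · exact ⟨0, by simp [cubF]⟩
  · intro s hs
    have hdeg : s.degree = 3 := by
      have h1 := hF (MvPolynomial.mem_support_iff.mp hs)
      rwa [Finsupp.degree_eq_weight_one]
    have hcard : Multiset.card (Finsupp.toMultiset s) = 3 := by
      rw [Finsupp.card_toMultiset]; exact hdeg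
    obtain ⟨i, j, k, hijk⟩ := Multiset.card_eq_three.mp hcard
    have hs' : s = Finsupp.single i 1 + Finsupp.single j 1 + Finsupp.single k 1 := by
      have h1 := congrArg Multiset.toFinsupp hijk
      rw [Finsupp.toMultiset_toFinsupp] at h1
      have h2 : ({i, j, k} : Multiset (Fin 4)) = {i} + ({j} + {k}) := rfl
      rw [h1, h2]
      simp only [map_add, Multiset.toFinsupp_singleton, add_assoc]
    refine ⟨fun i' j' k' => if i' = i ∧ j' = j ∧ k' = k then coeff s F else 0, ?_⟩
    have : monomial s (coeff s F) = C (coeff s F) * X i * X j * X k := by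
      generalize coeff s F = a
      rw [hs', X, X, X, C_mul_monomial, monomial_mul, monomial_mul]
      simp
    rw [this, cubF, Finset.sum_eq_single i, Finset.sum_eq_single j, Finset.sum_eq_single k]
    · simp
    · intro b _ hb; simp [hb]
    · simp
    · intro b _ hb; simp [hb]
    · simp
    · intro b _ hb; simp [hb]
    · simp

end basic

section change

variable {K L : Type*} [Field K] [Field L] (φ : K →+* L)
  (c : Fin 4 → Fin 4 → Fin 4 → K)

/-- Base change of coefficients. -/
def mc : Fin 4 → Fin 4 → Fin 4 → L := fun i j k => φ (c i j k)

lemma map_cubF : MvPolynomial.map φ (cubF c) = cubF (mc φ c) := by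
  simp [cubF, mc]

lemma tri_map (u v w : Fin 4 → K) :
    tri (mc φ c) (clVec φ u) (clVec φ v) (clVec φ w) = φ (tri c u v w) := by
  simp [tri, mc, clVec]

lemma N_map (u : Fin 4 → K) : N (mc φ c) (clVec φ u) = φ (N c u) := by
  simp [N, tri_map]
lemma B_map (u v : Fin 4 → K) : B (mc φ c) (clVec φ u) (clVec φ v) = φ (B c u v) := by
  simp [B, tri_map]
lemma T_map (u v w : Fin 4 → K) :
    T (mc φ c) (clVec φ u) (clVec φ v) (clVec φ w) = φ (T c u v w) := by
  simp [T, tri_map]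

end change



section spans

variable {K : Type*} [Field K]

/-- Vector version of membership in the span. -/
def Sp (c : Fin 4 → Fin 4 → Fin 4 → K) (S : Set (Projectivization K (Fin 4 → K)))
    (v : Fin 4 → K) : Prop :=
  ∀ h : v ≠ 0, SpanMem (cubF c) S (Projectivization.mk K v h)

variable {c : Fin 4 → Fin 4 → Fin 4 → K} {S : Set (Projectivization K (Fin 4 → K))}

lemma Sp.of_smul {a : K} {v : Fin 4 → K} (ha : a ≠ 0) (h : Sp c S (a • v)) : Sp c S v := by
  intro hv
  have hav : a • v ≠ 0 := smul_ne_zero ha hv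
  have h1 := h hav
  have e : Projectivization.mk K v hv = Projectivization.mk K (a • v) hav := by
    rw [Projectivization.mk_eq_mk_iff']
    exact ⟨a⁻¹, by rw [smul_smul, inv_mul_cancel₀ ha, one_smul]⟩
  rw [e]; exact h1

/-- Elementary independence of a pair. -/
def I2 (p q : Fin 4 → K) : Prop := ∀ s t : K, s • p + t • q = 0 → s = 0 ∧ t = 0

/-- Elementary independence of a triple. -/
def I3 (p q r : Fin 4 → K) : Prop :=
  ∀ s t x : K, s • p + t • q + x • r = 0 → s = 0 ∧ t = 0 ∧ x = 0

/-- Elementary independence of a quadruple. -/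
def I4 (p q r m : Fin 4 → K) : Prop :=
  ∀ s t x y : K, s • p + t • q + x • r + y • m = 0 → s = 0 ∧ t = 0 ∧ x = 0 ∧ y = 0

lemma I2.li {p q : Fin 4 → K} (h : I2 p q) : LinearIndependent K ![p, q] :=
  LinearIndependent.pair_iff.mpr h

lemma I2.line {p q : Fin 4 → K} (h : I2 p q) : IsLine (Submodule.span K {p, q}) := by
  have := finrank_span_eq_card h.li
  have e : Set.range ![p, q] = {p, q} := by
    ext z
    simp [eq_comm, or_comm]
  rw [IsLine, ← e]
  simpa using this

lemma I2.not_on {p q : Fin 4 → K} (h : lineRestrict (cubF c) p q ≠ 0) :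
    ¬ LineOnSurf (cubF c) (Submodule.span K {p, q}) := by
  intro h2
  exact h (h2 p q (Submodule.subset_span (by simp)) (Submodule.subset_span (by simp)))

lemma cubF_hom : (cubF c).IsHomogeneous 3 := by
  unfold cubF
  refine IsHomogeneous.sum _ _ _ fun i _ => IsHomogeneous.sum _ _ _ fun j _ =>
    IsHomogeneous.sum _ _ _ fun k _ => ?_
  have h1 := ((isHomogeneous_C (Fin 4) (c i j k)).mul (isHomogeneous_X K i)).mul
    (isHomogeneous_X K j)
  exact h1.mul (isHomogeneous_X K k)

/-- Tangent step. -/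
lemma Sp.tangent {p v : Fin 4 → K} (hp : Sp c S p) (hI : I2 p v) (hF : N c p = 0)
    (hB : B c p v = 0) (hne : ¬ (B c v p = 0 ∧ N c v = 0)) :
    Sp c S ((-N c v) • p + B c v p • v) := by
  intro hr
  have hp0 : p ≠ 0 := by
    rintro rfl
    have := hI 1 0 (by simp)
    simp at this
  have hL := lineRestrict_cubF c p v
  refine SpanMem.secant _ _ _ (Submodule.span K {p, v}) hI.line ?_ (hp hp0) (hp hp0) ?_ ?_
  · apply I2.not_on
    intro h0
    rw [hL] at h0
    have := binary_eq_zero h0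
    exact hne ⟨this.2.2.1, this.2.2.2⟩
  · apply mk_mem_zeroSet cubF_hom
    rw [eval_cubF]
    simp only [N_add, N_smul, B_smul_left, B_smul_right, hF, hB]
    ring
  · have h0 : (1 : K) • p + (0 : K) • v ≠ 0 := by simpa using hp0
    refine ⟨p, v, Submodule.subset_span (by simp), Submodule.subset_span (by simp), hI.li, 1,
      ![1, 1, -N c v], ![0, 0, B c v p], ?_, one_ne_zero, ?_, ?_, ?_, ?_⟩
    · intro k
      fin_cases k
      · exact h0
      · exact h0
      · exact hr
    · rw [hL, hF, hB, Fin.prod_univ_three]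
      simp only [Matrix.cons_val_zero, Matrix.cons_val_one, Matrix.cons_val, map_zero, map_one,
        map_neg]
      ring
    · congr 1; simp
    · congr 1; simp
    · rfl

/-- Secant step, solved for one of the two points. -/
lemma Sp.secant {p q : Fin 4 → K} (hp : Sp c S p) (hI : I2 p q) (hFp : N c p = 0)
    (hFq : N c q = 0) (hne : ¬ (B c p q = 0 ∧ B c q p = 0))
    (hr : Sp c S ((-B c q p) • p + B c p q • q)) : Sp c S q := by
  intro hq0
  have hp0 : p ≠ 0 := by
    rintro rfl
    have := hI 1 0 (by simp)
    simp at this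
  have hr0 : (-B c q p) • p + B c p q • q ≠ 0 := by
    intro h
    have := hI _ _ h
    exact hne ⟨this.2, by simpa using this.1⟩
  have hL := lineRestrict_cubF c p q
  refine SpanMem.secant _ _ _ (Submodule.span K {p, q}) hI.line ?_ (hp hp0) (hr hr0) ?_ ?_
  · apply I2.not_on
    intro h0
    rw [hL] at h0
    have := binary_eq_zero h0
    exact hne ⟨this.2.1, this.2.2.1⟩
  · apply mk_mem_zeroSet cubF_hom
    rw [eval_cubF, hFq]
  · have h0 : (1 : K) • p + (0 : K) • q ≠ 0 := by simpa using hp0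
    have h1 : (0 : K) • p + (1 : K) • q ≠ 0 := by simpa using hq0
    refine ⟨p, q, Submodule.subset_span (by simp), Submodule.subset_span (by simp), hI.li, -1,
      ![1, -B c q p, 0], ![0, B c p q, 1], ?_, by simp, ?_, ?_, ?_, ?_⟩
    · intro k
      fin_cases k
      · exact h0
      · exact hr0
      · exact h1
    · rw [hL, hFp, hFq, Fin.prod_univ_three]
      simp only [Matrix.cons_val_zero, Matrix.cons_val_one, Matrix.cons_val, map_zero, map_one,
        map_neg]
      ring
    · congr 1; simp
    · rfl
    · congr 1; simp

/-- Half-discriminant of the conic with given coefficients. -/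
def disc (A B C f g h : K) : K := 4 * A * B * C + f * g * h - A * f ^ 2 - B * g ^ 2 - C * h ^ 2

/-- Discriminant of the residual conic in the plane spanned by `n, R, Q`. -/
def dsc (c : Fin 4 → Fin 4 → Fin 4 → K) (n R Q : Fin 4 → K) : K :=
  disc (N c n) (B c R n) (B c Q n) (T c n R Q) (B c n Q) (B c n R)

lemma N_plane (n R Q : Fin 4 → K) (x y w : K) (hR : N c R = 0) (hQ : N c Q = 0)
    (h1 : B c R Q = 0) (h2 : B c Q R = 0) :
    N c (x • n + y • R + w • Q) = x * (N c n * x ^ 2 + B c R n * y ^ 2 + B c Q n * w ^ 2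
      + T c n R Q * y * w + B c n Q * x * w + B c n R * x * y) := by
  simp only [N_add, N_smul, B_add_left, B_add_right, B_smul_left, B_smul_right, T_smul1, T_smul2,
    T_smul3, hR, hQ, h1, h2]
  ring

/-- Lemma C: conic points off the line are in the span. -/
lemma conic_pts {n R Q : Fin 4 → K} (hI : I3 n R Q) (hR : N c R = 0) (hQ : N c Q = 0)
    (h1 : B c R Q = 0) (h2 : B c Q R = 0) (hn : B c Q n = 0) (hd : dsc c n R Q ≠ 0)
    (hS : Sp c S Q) (x y w : K) (hx : x ≠ 0) (hN : N c (x • n + y • R + w • Q) = 0) :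
    Sp c S (x • n + y • R + w • Q) := by
  have e := N_plane n R Q x y w hR hQ h1 h2
  have e0 := N_plane n R Q x y 0 hR hQ h1 h2
  simp only [zero_smul, add_zero] at e0
  rw [hN, hn] at e
  rw [hn] at e0
  have e' := (mul_eq_zero.mp e.symm).resolve_left hx
  have eB : B c (x • n + y • R) Q = x * (T c n R Q * y + B c n Q * x) := by
    simp only [B_add_left, B_smul_left, T_smul1, T_smul2, h1]; ring
  have eB2 : B c Q (x • n + y • R) = 0 := by
    simp only [B_add_right, B_smul_right, hn, h2]; ring
  have hk : T c n R Q * y + B c n Q * x ≠ 0 := by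
    intro hk
    apply hd
    have e2 : N c n * x ^ 2 + B c R n * y ^ 2 + B c n R * x * y = 0 := by
      linear_combination e' - w * hk
    rw [dsc, disc, hn]
    have hx2 : x ^ 2 ≠ 0 := pow_ne_zero 2 hx
    apply (mul_eq_zero.mp (?_ : x ^ 2 * _ = 0)).resolve_left hx2
    linear_combination (-(T c n R Q) ^ 2) * e2 + (B c R n * (T c n R Q * y - B c n Q * x)
      + T c n R Q * B c n R * x) * hk
  have hI2 : I2 Q (x • n + y • R) := by
    intro s t hst
    have := hI (t * x) (t * y) s (by rw [← hst]; module)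
    refine ⟨this.2.2, (mul_eq_zero.mp this.1).resolve_right hx⟩
  have hB0 : B c (x • n + y • R) Q ≠ 0 := by rw [eB]; exact mul_ne_zero hx hk
  have := hS.tangent hI2 hQ eB2 (fun h => hB0 h.1)
  apply Sp.of_smul hB0
  convert this using 1
  have : N c (x • n + y • R) = - w * B c (x • n + y • R) Q := by
    rw [e0, eB]
    linear_combination x * e'
  rw [this]
  module

/-- Lemma P. -/
lemma line_pt {n R Q : Fin 4 → K} (hI : I3 n R Q) (hR : N c R = 0) (hQ : N c Q = 0)
    (h1 : B c R Q = 0) (h2 : B c Q R = 0) (hn : B c Q n = 0) (hRn : B c R n ≠ 0)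
    (hd : dsc c n R Q ≠ 0) (hS : Sp c S Q) : Sp c S R := by
  obtain ⟨y, hy⟩ : ∃ y : K, T c n R Q * y + B c n Q ≠ 0 := by
    by_contra! h
    have a0 := h 0
    have a1 := h 1
    simp only [mul_zero, zero_add] at a0
    simp only [mul_one, a0, add_zero] at a1
    apply hd
    simp [dsc, disc, hn, a0, a1]
  set x := T c n R Q * y + B c n Q with hx
  set w := -(N c n + B c R n * y ^ 2 + B c n R * y) with hw
  have hN : N c (x • n + (x * y) • R + w • Q) = 0 := by
    rw [N_plane n R Q _ _ _ hR hQ h1 h2, hn, hw, hx]; ring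
  set p := x • n + (x * y) • R + w • Q with hp
  have hSp : Sp c S p := conic_pts hI hR hQ h1 h2 hn hd hS _ _ _ hy hN
  have hI2 : I2 p R := by
    intro s t hst
    have := hI (s * x) (s * (x * y) + t) (s * w) (by rw [← hst, hp]; module)
    have hs := (mul_eq_zero.mp this.1).resolve_right hy
    refine ⟨hs, ?_⟩
    have := this.2.1
    simpa [hs] using this
  have hB : B c R p = x * B c R n := by
    simp only [hp, B_add_right, B_smul_right, B_self, hR, h1]; ring
  have hB0 : B c R p ≠ 0 := by rw [hB]; exact mul_ne_zero hy hRn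
  refine hSp.secant hI2 hN hR (fun h => hB0 h.2) ?_
  have hr : (-B c R p) • p + B c p R • R = (-B c R p * x) • n
      + (-B c R p * (x * y) + B c p R) • R + (-B c R p * w) • Q := by
    conv_lhs => rw [hp]
    rw [← hp]
    module
  have hNr : N c ((-B c R p) • p + B c p R • R) = 0 := by
    simp only [N_add, N_smul, B_smul_left, B_smul_right, hN, hR]; ring
  rw [hr] at hNr ⊢
  exact conic_pts hI hR hQ h1 h2 hn hd hS _ _ _ (mul_ne_zero (neg_ne_zero.mpr hB0) hy) hNr

end spans



section pencil

variable {K : Type*} [Field K]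

/-- The discriminant along the pencil of planes through a line, as a polynomial. -/
def dpoly (a0 a1 a2 f Nn bnm bmn Nm bRm tmRQ bnQ tnmQ bmQ bnR tnmR bmR : K) : Polynomial K :=
  let α : Polynomial K := -(Polynomial.C a0 + Polynomial.C a1 * Polynomial.X
    + Polynomial.C a2 * Polynomial.X ^ 2)
  let β : Polynomial K := Polynomial.C f * Polynomial.X
  let A : Polynomial K := α ^ 3 * Polynomial.C Nn + α ^ 2 * β * Polynomial.C bnm
    + α * β ^ 2 * Polynomial.C bmn + β ^ 3 * Polynomial.C Nm
  let b : Polynomial K := β * Polynomial.C bRm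
  let e : Polynomial K := β * Polynomial.C a0
  let f' : Polynomial K := α * Polynomial.C f + β * Polynomial.C tmRQ
  let g : Polynomial K := α ^ 2 * Polynomial.C bnQ + α * β * Polynomial.C tnmQ
    + β ^ 2 * Polynomial.C bmQ
  let h : Polynomial K := α ^ 2 * Polynomial.C bnR + α * β * Polynomial.C tnmR
    + β ^ 2 * Polynomial.C bmR
  4 * A * b * e + f' * g * h - A * f' ^ 2 - b * g ^ 2 - e * h ^ 2

lemma dpoly_deg (a0 a1 a2 f Nn bnm bmn Nm bRm tmRQ bnQ tnmQ bmQ bnR tnmR bmR : K) :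
    (dpoly a0 a1 a2 f Nn bnm bmn Nm bRm tmRQ bnQ tnmQ bmQ bnR tnmR bmR).natDegree ≤ 10 := by
  unfold dpoly
  dsimp only
  compute_degree

lemma dpoly_ne1 (a0 a1 a2 f Nn bnm bmn Nm bRm tmRQ bnQ tnmQ bmQ bnR tnmR bmR : K)
    (h0 : a0 ≠ 0) (hd : disc Nn 0 0 f bnQ bnR ≠ 0) :
    dpoly a0 a1 a2 f Nn bnm bmn Nm bRm tmRQ bnQ tnmQ bmQ bnR tnmR bmR ≠ 0 := by
  intro h
  have h1 := congrArg (Polynomial.eval 0) h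
  simp only [dpoly, Polynomial.eval_add, Polynomial.eval_sub, Polynomial.eval_mul,
    Polynomial.eval_pow, Polynomial.eval_neg, Polynomial.eval_C, Polynomial.eval_X,
    Polynomial.eval_zero] at h1
  refine mul_ne_zero (pow_ne_zero 5 h0) hd ?_
  rw [disc]
  linear_combination -h1

lemma dpoly_ne2 (a0 a1 a2 f bnm bmn Nm bRm tmRQ tnmQ bmQ tnmR bmR : K)
    (h0 : a0 ≠ 0) (hf : f ≠ 0) (hb : bnm ≠ 0) :
    dpoly a0 a1 a2 f 0 bnm bmn Nm bRm tmRQ 0 tnmQ bmQ 0 tnmR bmR ≠ 0 := by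
  intro h
  have h1 := congrArg (fun p => Polynomial.eval 0 (Polynomial.derivative p)) h
  simp [dpoly, Polynomial.derivative_mul, Polynomial.derivative_pow, h0, hf, hb] at h1

lemma exists_nonroot (hK : 13 ≤ Cardinal.mk K) (D : Polynomial K) (hD : D ≠ 0)
    (hdeg : D.natDegree ≤ 10) : ∃ y : K, y ≠ 0 ∧ D.eval y ≠ 0 := by
  by_contra! h
  obtain ⟨s, hs⟩ := Cardinal.exists_finset_le_card K 13 (by exact_mod_cast hK)
  have h0 : Polynomial.X * D = 0 := by
    refine Polynomial.eq_zero_of_natDegree_lt_card_of_eval_eq_zero' _ s ?_ ?_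
    · intro y _
      by_cases hy : y = 0
      · simp [hy]
      · simp [h y hy]
    · have := Polynomial.natDegree_mul_le (p := (Polynomial.X : Polynomial K)) (q := D)
      rw [Polynomial.natDegree_X] at this
      omega
  exact (mul_ne_zero Polynomial.X_ne_zero hD) h0

variable {c : Fin 4 → Fin 4 → Fin 4 → K} {S : Set (Projectivization K (Fin 4 → K))}

lemma pencil (hK : 13 ≤ Cardinal.mk K) {n R Q m : Fin 4 → K} (hI : I4 n R Q m)
    (hR : N c R = 0) (hQ : N c Q = 0) (h1 : B c R Q = 0) (h2 : B c Q R = 0)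
    (hQn : B c Q n = 0) (hRn : B c R n = 0) (hf : T c n R Q ≠ 0) (hRm : B c R m ≠ 0)
    (hQm : B c Q m ≠ 0)
    (hd : dsc c n R Q ≠ 0 ∨ (N c n = 0 ∧ B c n Q = 0 ∧ B c n R = 0 ∧ B c n m ≠ 0))
    (hS : ∀ y : K, y ≠ 0 → Sp c S (Q + y • R)) : Sp c S R := by
  set D := dpoly (B c Q m) (T c Q R m) (B c R m) (T c n R Q) (N c n) (B c n m) (B c m n) (N c m)
    (B c R m) (T c m R Q) (B c n Q) (T c n m Q) (B c m Q) (B c n R) (T c n m R) (B c m R) with hDdef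
  have hD : D ≠ 0 := by
    rcases hd with hd | ⟨e1, e2, e3, e4⟩
    · apply dpoly_ne1 _ _ _ _ _ _ _ _ _ _ _ _ _ _ _ _ hQm
      rwa [dsc, hQn, hRn] at hd
    · rw [hDdef, e1, e2, e3]
      exact dpoly_ne2 _ _ _ _ _ _ _ _ _ _ _ _ _ hQm hf e4
  obtain ⟨y, hy, hDy⟩ := exists_nonroot hK D hD (dpoly_deg _ _ _ _ _ _ _ _ _ _ _ _ _ _ _ _)
  obtain ⟨α, hα⟩ : ∃ α, α = -(B c Q m + T c Q R m * y + B c R m * y ^ 2) := ⟨_, rfl⟩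
  obtain ⟨β, hβ⟩ : ∃ β, β = T c n R Q * y := ⟨_, rfl⟩
  have hβ0 : β ≠ 0 := by rw [hβ]; exact mul_ne_zero hf hy
  have hT : T c Q R n = T c n R Q := by simp only [T]; ring
  have hT2 : T c Q R m = T c m R Q := by simp only [T]; ring
  refine line_pt (n := α • n + β • m) (Q := Q + y • R) ?_ hR ?_ ?_ ?_ ?_ ?_ ?_ (hS y hy)
  · intro s t x h
    have := hI (s * α) (t + x * y) x (s * β) (by rw [← h]; module)
    obtain ⟨_, a2, a3, a4⟩ := this
    refine ⟨(mul_eq_zero.mp a4).resolve_right hβ0, by simpa [a3] using a2, a3⟩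
  · simp only [N_add, N_smul, B_smul_left, B_smul_right, hR, hQ, h1, h2]; ring
  · simp only [B_add_right, B_smul_right, B_self, hR, h1]; ring
  · simp only [B_add_left, B_smul_left, T_smul2, T_self23, B_self, hR, h1, h2]; ring
  · simp only [B_add_left, B_add_right, B_smul_left, B_smul_right, T_smul2, hQn, hRn, hT, hα, hβ]
    ring
  · simp only [B_add_right, B_smul_right, hRn, mul_zero, zero_add]
    exact mul_ne_zero hβ0 hRm
  · intro h0
    apply hDy
    rw [hDdef]
    simp only [dpoly, Polynomial.eval_add, Polynomial.eval_sub, Polynomial.eval_mul,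
      Polynomial.eval_pow, Polynomial.eval_neg, Polynomial.eval_C, Polynomial.eval_X,
      Polynomial.eval_ofNat]
    rw [← hα, ← hβ, ← h0]
    simp only [dsc, disc, N_add, N_smul, B_add_left, B_add_right, B_smul_left, B_smul_right,
      T_add1, T_add2, T_add3, T_smul1, T_smul2, T_smul3, T_self23, hQn, hRn, hT, hT2, hR, hQ]
    ring

end pencil



section cases

variable {K : Type*} [Field K]
variable {c : Fin 4 → Fin 4 → Fin 4 → K} {S : Set (Projectivization K (Fin 4 → K))}

/-- Smoothness at the points over the given field. -/
def Sm (c : Fin 4 → Fin 4 → Fin 4 → K) : Prop :=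
  ∀ v : Fin 4 → K, v ≠ 0 → N c v = 0 → ∃ d, B c v d ≠ 0

lemma Sp.smul {v : Fin 4 → K} (h : Sp c S v) (a : K) : Sp c S (a • v) := by
  by_cases ha : a = 0
  · intro h0; exact absurd (by simp [ha]) h0
  · apply Sp.of_smul (inv_ne_zero ha)
    rwa [smul_smul, inv_mul_cancel₀ ha, one_smul]

lemma I4.li {a b e m : Fin 4 → K} (h : I4 a b e m) : LinearIndependent K ![a, b, e, m] := by
  rw [Fintype.linearIndependent_iff]
  intro g hg
  rw [Fin.sum_univ_four] at hg
  obtain ⟨h0, h1, h2, h3⟩ := h (g 0) (g 1) (g 2) (g 3) hg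
  intro i
  fin_cases i
  · exact h0
  · exact h1
  · exact h2
  · exact h3

lemma I4.of_li {a b e m : Fin 4 → K} (h : LinearIndependent K ![a, b, e, m]) : I4 a b e m := by
  rw [Fintype.linearIndependent_iff] at h
  intro s t x y hs
  have := h ![s, t, x, y] (by rw [Fin.sum_univ_four]; exact hs)
  exact ⟨this 0, this 1, this 2, this 3⟩

lemma I4.comb {a b e m : Fin 4 → K} (h : I4 a b e m) (v : Fin 4 → K) :
    ∃ s t x y : K, v = s • a + t • b + x • e + y • m := by
  let bs := basisOfLinearIndependentOfCardEqFinrank h.li (by simp)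
  have h1 := bs.sum_repr v
  rw [Fin.sum_univ_four] at h1
  refine ⟨bs.repr v 0, bs.repr v 1, bs.repr v 2, bs.repr v 3, ?_⟩
  conv_lhs => rw [← h1]
  simp [bs]

lemma I4.map {L : Type*} [Field L] (φ : K →+* L) {a b e m : Fin 4 → K} (h : I4 a b e m) :
    I4 (clVec φ a) (clVec φ b) (clVec φ e) (clVec φ m) := by
  apply I4.of_li
  have h1 : LinearIndependent K (Matrix.of ![a, b, e, m]).row := h.li
  rw [Matrix.linearIndependent_rows_iff_isUnit, Matrix.isUnit_iff_isUnit_det] at h1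
  have h2 : LinearIndependent L (φ.mapMatrix (Matrix.of ![a, b, e, m])).row := by
    rw [Matrix.linearIndependent_rows_iff_isUnit, Matrix.isUnit_iff_isUnit_det, ← RingHom.map_det]
    exact h1.map φ
  convert h2 using 1
  funext i
  fin_cases i <;> rfl

lemma I4.ne_zero {a b e m : Fin 4 → K} (h : I4 a b e m) : a ≠ 0 := by
  rintro rfl
  have := (h 1 0 0 0 (by simp)).1
  exact one_ne_zero this

lemma I4.i3 {a b e m : Fin 4 → K} (h : I4 a b e m) : I3 a b e := by
  intro s t x hs
  have := h s t x 0 (by rw [← hs]; module)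
  exact ⟨this.1, this.2.1, this.2.2.1⟩

lemma Sm.ne (hS : Sm c) {a b e m : Fin 4 → K} (h : I4 a b e m) (ha : N c a = 0)
    (hb : B c a b = 0) (he : B c a e = 0) : B c a m ≠ 0 := by
  intro hm
  obtain ⟨d, hd⟩ := hS a h.ne_zero ha
  obtain ⟨s, t, x, y, rfl⟩ := h.comb d
  apply hd
  simp only [B_add_right, B_smul_right, B_self, ha, hb, he, hm]; ring

lemma I4.swap12 {a b e m : Fin 4 → K} (h : I4 a b e m) : I4 b a e m := by
  intro s t x y hs
  have := h t s x y (by rw [← hs]; module)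
  tauto

lemma I4.swap23 {a b e m : Fin 4 → K} (h : I4 a b e m) : I4 a e b m := by
  intro s t x y hs
  have := h s x t y (by rw [← hs]; module)
  tauto

lemma dsc_comb (n R P : Fin 4 → K) (hR : N c R = 0) (hP : N c P = 0)
    (h1 : B c R P = 0) (h2 : B c P R = 0) (hn : B c P n = 0) (y w : K) :
    dsc c n (y • R + w • P) P = y ^ 2 * dsc c n R P := by
  have hT : T c R P n = T c n R P := by simp only [T]; ring
  simp only [dsc, disc, B_add_left, B_add_right, B_smul_left, B_smul_right, T_add2,
    T_smul1, T_smul2, T_smul3, T_self23, hR, hP, hn, hT]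
  ring

/-- Smooth residual conic: all points of the line are in the span. -/
lemma caseA (hK : 13 ≤ Cardinal.mk K) (hSm : Sm c) {n R P m : Fin 4 → K} (hI : I4 n R P m)
    (hR : N c R = 0) (hP : N c P = 0) (h1 : B c R P = 0) (h2 : B c P R = 0)
    (hn : B c P n = 0) (hd : dsc c n R P ≠ 0) (hS : Sp c S P) : Sp c S R := by
  by_cases hRn : B c R n = 0
  · have hf : T c n R P ≠ 0 := by
      intro hf; apply hd; simp [dsc, disc, hf, hRn, hn]
    refine pencil hK hI hR hP h1 h2 hn hRn hf ?_ ?_ (Or.inl hd) ?_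
    · exact hSm.ne hI.swap12 hR hRn h1
    · exact hSm.ne hI.swap23.swap12 hP hn h2
    · intro y hy
      have e : P + y • R = y • R + (1 : K) • P := by module
      rw [e]
      refine line_pt (n := n) (Q := P) ?_ ?_ hP ?_ ?_ hn ?_ ?_ hS
      · intro s t x h
        have := hI.i3 s (t * y) (t + x) (by rw [← h]; module)
        have ht := (mul_eq_zero.mp this.2.1).resolve_right hy
        refine ⟨this.1, ht, by simpa [ht] using this.2.2⟩
      · simp only [N_add, N_smul, B_smul_left, B_smul_right, hR, hP, h1, h2]; ring
      · simp only [B_add_left, B_smul_left, B_smul_right, T_smul2, T_self23, B_self, hP, h1,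
          h2]
        ring
      · simp only [B_add_right, B_smul_right, B_self, hP, h2]; ring
      · have hT : T c R P n = T c n R P := by simp only [T]; ring
        simp only [B_add_left, B_smul_left, T_smul1, T_smul2, hRn, hn, hT]
        simpa using ⟨hy, hf⟩
      · rw [dsc_comb n R P hR hP h1 h2 hn]
        exact mul_ne_zero (pow_ne_zero 2 hy) hd
  · exact line_pt hI.i3 hR hP h1 h2 hn hRn hd hS

lemma caseA_all (hK : 13 ≤ Cardinal.mk K) (hSm : Sm c) {n R P m : Fin 4 → K} (hI : I4 n R P m)
    (hR : N c R = 0) (hP : N c P = 0) (h1 : B c R P = 0) (h2 : B c P R = 0)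
    (hn : B c P n = 0) (hd : dsc c n R P ≠ 0) (hS : Sp c S P) (x y w : K)
    (hz : N c (x • n + y • R + w • P) = 0) : Sp c S (x • n + y • R + w • P) := by
  by_cases hx : x = 0
  · subst hx
    rw [zero_smul, zero_add]
    by_cases hy : y = 0
    · subst hy
      rw [zero_smul, zero_add]
      exact hS.smul w
    · refine caseA hK hSm (n := n) (m := m) (P := P) ?_ ?_ hP ?_ ?_ hn ?_ hS
      · intro s t x' y' h
        have := hI s (t * y) (t * w + x') y' (by rw [← h]; module)
        have ht := (mul_eq_zero.mp this.2.1).resolve_right hy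
        refine ⟨this.1, ht, by simpa [ht] using this.2.2.1, this.2.2.2⟩
      · simp only [N_add, N_smul, B_smul_left, B_smul_right, hR, hP, h1, h2]; ring
      · simp only [B_add_left, B_smul_left, B_smul_right, T_smul2, T_self23, B_self, hP, h1,
          h2]
        ring
      · simp only [B_add_right, B_smul_right, B_self, hP, h2]; ring
      · rw [dsc_comb n R P hR hP h1 h2 hn]
        exact mul_ne_zero (pow_ne_zero 2 hy) hd
  · exact conic_pts hI.i3 hR hP h1 h2 hn hd hS x y w hx hz

lemma tri_edge {a b e : Fin 4 → K} (hI : I3 a b e) (ha : N c a = 0) (hb : N c b = 0)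
    (he : N c e = 0) (hab : B c a b = 0) (hba : B c b a = 0) (hae : B c a e = 0)
    (hbe : B c b e = 0) (hea : B c e a = 0) (heb : B c e b = 0)
    (hT : T c a b e ≠ 0) (hS : Sp c S e) {x y : K} (hx : x ≠ 0) (hy : y ≠ 0) :
    Sp c S (x • a + y • b) := by
  have hI2 : I2 e (x • a + y • b) := by
    intro s t h
    have := hI (t * x) (t * y) s (by rw [← h]; module)
    exact ⟨this.2.2, (mul_eq_zero.mp this.1).resolve_right hx⟩
  have e1 : B c (x • a + y • b) e = x * y * T c a b e := by
    simp only [B_add_left, B_smul_left, T_smul1, T_smul2, hae, hbe]; ring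
  have e2 : N c (x • a + y • b) = 0 := by
    simp only [N_add, N_smul, B_smul_left, B_smul_right, ha, hb, hab, hba]; ring
  have e3 : B c e (x • a + y • b) = 0 := by
    simp only [B_add_right, B_smul_right, hea, heb]; ring
  have hne : B c (x • a + y • b) e ≠ 0 := by
    rw [e1]; exact mul_ne_zero (mul_ne_zero hx hy) hT
  have := hS.tangent hI2 he e3 (fun h => hne h.1)
  rw [e2] at this
  apply Sp.of_smul hne
  simpa using this

/-- Three lines forming a triangle. -/
lemma triangle (hK : 13 ≤ Cardinal.mk K) (hSm : Sm c) {a b e m : Fin 4 → K} (hI : I4 a b e m)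
    (ha : N c a = 0) (hb : N c b = 0)
    (he : N c e = 0) (hab : B c a b = 0) (hba : B c b a = 0) (hae : B c a e = 0)
    (hbe : B c b e = 0) (hea : B c e a = 0) (heb : B c e b = 0)
    (hT : T c a b e ≠ 0) (hS : Sp c S e) (x y w : K) (h0 : x * y * w = 0) :
    Sp c S (x • a + y • b + w • e) := by
  have t1 : T c e b a ≠ 0 := by
    have : T c e b a = T c a b e := by simp only [T]; ring
    rwa [this]
  have t2 : T c e a b ≠ 0 := by
    have : T c e a b = T c a b e := by simp only [T]; ring
    rwa [this]
  have t3 : T c b e a ≠ 0 := by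
    have : T c b e a = T c a b e := by simp only [T]; ring
    rwa [this]
  have t4 : T c a e b ≠ 0 := by
    have : T c a e b = T c a b e := by simp only [T]; ring
    rwa [this]
  have hma : B c a m ≠ 0 := hSm.ne hI ha hab hae
  have hmb : B c b m ≠ 0 := hSm.ne hI.swap12 hb hba hbe
  have hme : B c e m ≠ 0 := hSm.ne hI.swap23.swap12 he hea heb
  have edge : ∀ {x y : K}, x ≠ 0 → y ≠ 0 → Sp c S (x • a + y • b) := fun hx hy =>
    tri_edge hI.i3 ha hb he hab hba hae hbe hea heb hT hS hx hy
  have hSb : Sp c S b := by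
    refine pencil hK (n := e) (R := b) (Q := a) (m := m) hI.swap12.swap23.swap12
      hb ha hba hab hae hbe t1 hmb hma (Or.inr ⟨he, hea, heb, hme⟩) ?_
    intro y hy
    have := edge (one_ne_zero) hy
    rwa [one_smul] at this
  have hSa : Sp c S a := by
    refine pencil hK (n := e) (R := a) (Q := b) (m := m) hI.swap23.swap12
      ha hb hab hba hbe hae t2 hma hmb (Or.inr ⟨he, heb, hea, hme⟩) ?_
    intro y hy
    have := edge hy (one_ne_zero)
    rwa [one_smul, add_comm] at this
  rcases mul_eq_zero.mp h0 with h0 | hw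
  · rcases mul_eq_zero.mp h0 with hx | hy
    · subst hx
      rw [zero_smul, zero_add]
      by_cases hy : y = 0
      · subst hy; rw [zero_smul, zero_add]; exact hS.smul w
      by_cases hw : w = 0
      · subst hw; rw [zero_smul, add_zero]; exact hSb.smul y
      exact tri_edge hI.swap12.swap23.i3 hb he ha hbe heb hba hea hab hae t3 hSa hy hw
    · subst hy
      rw [zero_smul, add_zero]
      by_cases hx : x = 0
      · subst hx; rw [zero_smul, zero_add]; exact hS.smul w
      by_cases hw : w = 0
      · subst hw; rw [zero_smul, add_zero]; exact hSa.smul x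
      exact tri_edge hI.swap23.i3 ha he hb hae hea hab heb hba hbe t4 hSb hx hw
  · subst hw
    rw [zero_smul, add_zero]
    by_cases hx : x = 0
    · subst hx; rw [zero_smul, zero_add]; exact hSb.smul y
    by_cases hy : y = 0
    · subst hy; rw [zero_smul, add_zero]; exact hSa.smul x
    exact edge hx hy

/-- Residual conic splitting, with `P` on exactly one component. -/
lemma caseB_all (hK : 13 ≤ Cardinal.mk K) (hSm : Sm c) {n R P m : Fin 4 → K} (hI : I4 n R P m)
    (hR : N c R = 0) (hP : N c P = 0) (h1 : B c R P = 0) (h2 : B c P R = 0)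
    (hn : B c P n = 0) (hd : dsc c n R P = 0) (hf : T c n R P ≠ 0) (hS : Sp c S P) (x y w : K)
    (hz : N c (x • n + y • R + w • P) = 0) : Sp c S (x • n + y • R + w • P) := by
  obtain ⟨f, hfe⟩ : ∃ f, T c n R P = f := ⟨_, rfl⟩
  rw [hfe] at hf
  obtain ⟨g, hg⟩ : ∃ g, B c n P = f * g := ⟨B c n P / f, by field_simp⟩
  obtain ⟨h, hh⟩ : ∃ h, B c n R = f * h := ⟨B c n R / f, by field_simp⟩
  obtain ⟨b, hb⟩ : ∃ b, B c R n = f * b := ⟨B c R n / f, by field_simp⟩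
  have hA : N c n = f * g * h - f * b * g ^ 2 := by
    rw [dsc, disc, hn, hfe, hg, hh, hb] at hd
    have hf2 : f ^ 2 ≠ 0 := pow_ne_zero 2 hf
    apply mul_left_cancel₀ hf2
    linear_combination -hd
  have hT2 : T c R P n = f := by rw [← hfe]; simp only [T]; ring
  have hT3 : T c n P R = f := by rw [← hfe]; simp only [T]; ring
  obtain ⟨k, hk⟩ : ∃ k, k = 2 * b * g - h := ⟨_, rfl⟩
  have key : ∀ x y w : K, (x • (n + (-g) • R + k • P) + y • (R + (-b) • P) + w • P)
      = x • n + (y - g * x) • R + (w - b * y + k * x) • P := by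
    intro x y w; module
  have keyN : ∀ x y w : K, N c (x • (n + (-g) • R + k • P) + y • (R + (-b) • P) + w • P)
      = f * x * y * w := by
    intro x y w
    rw [key, N_plane n R P _ _ _ hR hP h1 h2, hn, hfe, hg, hh, hb, hA, hk]
    ring
  have e : x • n + y • R + w • P = x • (n + (-g) • R + k • P) + (y + g * x) • (R + (-b) • P)
      + (w + b * (y + g * x) - k * x) • P := by
    rw [key]; module
  rw [e] at hz ⊢
  rw [keyN] at hz
  refine triangle hK hSm (m := m) ?_ ?_ ?_ hP ?_ ?_ ?_ ?_ ?_ ?_ ?_ hS _ _ _ ?_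
  · intro s t x y h
    have := hI s (t - g * s) (x - b * t + k * s) y (by rw [← h]; module)
    obtain ⟨a1, a2, a3, a4⟩ := this
    subst a1
    have a2' : t = 0 := by simpa using a2
    subst a2'
    exact ⟨rfl, rfl, by simpa using a3, a4⟩
  · have := keyN 1 0 0
    simpa using this
  · have := keyN 0 1 0
    simpa using this
  all_goals try (
    simp only [B_add_left, B_add_right, B_smul_left, B_smul_right, T_add1, T_add2, T_add3,
      T_smul1, T_smul2, T_smul3, T_self12, T_self13, T_self23, B_self, hR, hP, h1, h2, hn,
      hfe, hg, hh, hb, hA, hT2, hT3, hk]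
    ring1)
  · have : T c (n + (-g) • R + k • P) (R + (-b) • P) P = f := by
      simp only [B_add_right, B_smul_right, T_add1, T_add2, T_add3, T_smul1, T_smul2, T_smul3, T_self12, T_self13, T_self23,
        B_self, hR, hP, h1, h2, hn, hfe]
      ring
    rwa [this]
  · have : f * (x * (y + g * x) * (w + b * (y + g * x) - k * x)) = 0 := by
      rw [← hz]; ring
    exact (mul_eq_zero.mp this).resolve_left hf

end cases



section smooth

variable {K : Type*} [Field K]

lemma sm_closure {c : Fin 4 → Fin 4 → Fin 4 → K} (h : IsSmoothHypersurf (cubF c)) :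
    Sm (mc (algebraMap K (AlgebraicClosure K)) c) := by
  intro v hv hN
  by_contra! hB
  apply hv
  apply h v
  · rw [map_cubF, eval_cubF, hN]
  · intro i
    have := hB (Pi.single i 1)
    rw [← pderiv_cubF] at this
    rw [map_cubF]
    simpa [Pi.single_apply] using this

lemma clVec_single {L : Type*} [Field L] (φ : K →+* L) (i : Fin 4) :
    clVec φ (Pi.single i 1) = Pi.single i 1 := by
  funext j
  by_cases h : j = i
  · subst h; simp [clVec]
  · simp [clVec, h]

lemma sm_base {c : Fin 4 → Fin 4 → Fin 4 → K} (h : IsSmoothHypersurf (cubF c)) : Sm c := by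
  intro v hv hN
  by_contra! hB
  apply clVec_ne_zero (algebraMap K (AlgebraicClosure K)) hv
  apply h
  · rw [map_cubF, eval_cubF, N_map, hN, map_zero]
  · intro i
    have h1 := B_map (algebraMap K (AlgebraicClosure K)) c v (Pi.single i 1)
    rw [hB, map_zero, clVec_single, ← pderiv_cubF] at h1
    rw [map_cubF]
    simpa [Pi.single_apply] using h1

end smooth

section closed

variable {L : Type*} [Field L] [IsAlgClosed L] {c : Fin 4 → Fin 4 → Fin 4 → L}

lemma exists_quad_root (a b e : L) (ha : a ≠ 0) : ∃ r : L, a * r ^ 2 + b * r + e = 0 := by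
  have hdeg := Polynomial.degree_quadratic (b := b) (c := e) ha
  obtain ⟨r, hr⟩ := IsAlgClosed.exists_root (Polynomial.C a * Polynomial.X ^ 2
    + Polynomial.C b * Polynomial.X + Polynomial.C e) (by rw [hdeg]; decide)
  refine ⟨r, ?_⟩
  simpa [Polynomial.IsRoot] using hr

/-- A plane section of a smooth cubic surface contains no double line. -/
lemma no_double (hS : Sm c) {u v n m : Fin 4 → L} (hI : I4 u v n m) (hu : N c u = 0)
    (hv : N c v = 0) (huv : B c u v = 0) (hvu : B c v u = 0) (hun : B c u n = 0)
    (hvn : B c v n = 0) (hT : T c u v n = 0) : False := by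
  obtain ⟨y, w, hyw, h0⟩ : ∃ y w : L, ¬ (y = 0 ∧ w = 0) ∧
      y ^ 2 * B c u m + y * w * T c u v m + w ^ 2 * B c v m = 0 := by
    by_cases ha : B c u m = 0
    · exact ⟨1, 0, by simp, by simp [ha]⟩
    · obtain ⟨r, hr⟩ := exists_quad_root _ (T c u v m) (B c v m) ha
      exact ⟨r, 1, by simp, by linear_combination hr⟩
  have hp : y • u + w • v ≠ 0 := by
    intro h
    have := hI y w 0 0 (by rw [← h]; module)
    exact hyw ⟨this.1, this.2.1⟩
  have hN : N c (y • u + w • v) = 0 := by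
    simp only [N_add, N_smul, B_smul_left, B_smul_right, hu, hv, huv, hvu]; ring
  obtain ⟨d, hd⟩ := hS _ hp hN
  obtain ⟨s, t, x, z, rfl⟩ := hI.comb d
  apply hd
  simp only [B_add_left, B_add_right, B_smul_left, B_smul_right, T_smul1, T_smul2, T_smul3,
    T_self13, T_self23, B_self, hu, hv, huv, hvu, hun, hvn, hT]
  linear_combination z * h0

lemma line_on {p q : Fin 4 → L} (hp : N c p = 0) (hq : N c q = 0) (h1 : B c p q = 0)
    (h2 : B c q p = 0) : LineOnSurf (cubF c) (Submodule.span L {p, q}) := by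
  intro u v hu hv
  obtain ⟨a, b, rfl⟩ := Submodule.mem_span_pair.mp hu
  obtain ⟨a', b', rfl⟩ := Submodule.mem_span_pair.mp hv
  rw [lineRestrict_cubF]
  have e1 : ∀ a b : L, N c (a • p + b • q) = 0 := by
    intro a b
    simp only [N_add, N_smul, B_smul_left, B_smul_right, hp, hq, h1, h2]; ring
  have e2 : ∀ a b a' b' : L, B c (a • p + b • q) (a' • p + b' • q) = 0 := by
    intro a b a' b'
    simp only [B_add_left, B_add_right, B_smul_left, B_smul_right, T_smul1, T_smul2, T_smul3,
      T_self13, T_self23, B_self, hp, hq, h1, h2]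
    ring
  simp [e1, e2]

/-- If the residual conic is singular at `P`, then `P` is an Eckardt point. -/
lemma eckardt_of (hS : Sm c) {n R P m : Fin 4 → L} (hI : I4 n R P m)
    (hR : N c R = 0) (hP : N c P = 0) (h1 : B c R P = 0) (h2 : B c P R = 0)
    (hn : B c P n = 0) (hf : T c n R P = 0) (hg : B c n P = 0) (hb : B c R n ≠ 0)
    (p : Projectivization L (Fin 4 → L)) (hp : ∃ a : L, p.rep = a • P) :
    EckardtAt (cubF c) p := by
  obtain ⟨a, ha⟩ := hp
  obtain ⟨r, hr⟩ := exists_quad_root (B c R n) (B c n R) (N c n) hb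
  obtain ⟨r', hr'⟩ : ∃ r', r' = -B c n R / B c R n - r := ⟨_, rfl⟩
  have hsum : B c R n * r + B c R n * r' + B c n R = 0 := by
    rw [hr']; field_simp; ring
  have hr2 : B c R n * r' ^ 2 + B c n R * r' + N c n = 0 := by
    linear_combination hr + (r' - r) * hsum
  have hT : T c R P n = 0 := by rw [← hf]; simp only [T]; ring
  have hv : ∀ r : L, B c R n * r ^ 2 + B c n R * r + N c n = 0 →
      N c (n + r • R) = 0 ∧ B c (n + r • R) P = 0 ∧ B c P (n + r • R) = 0 := by
    intro r hr
    refine ⟨?_, ?_, ?_⟩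
    · simp only [N_add, N_smul, B_smul_left, B_smul_right, hR]
      linear_combination hr
    · simp only [B_add_left, B_smul_left, T_smul2, hg, hf, h1]; ring
    · simp only [B_add_right, B_smul_right, hn, h2]; ring
  obtain ⟨q1, q2, q3⟩ := hv r hr
  obtain ⟨q1', q2', q3'⟩ := hv r' hr2
  by_cases hrr : r = r'
  · exfalso
    subst hrr
    refine no_double hS (u := P) (v := n + r • R) (n := R) (m := m) ?_ hP q1 q3 q2 h2 ?_ ?_
    · intro s t x y h
      have := hI t (t * r + x) s y (by rw [← h]; module)
      obtain ⟨a1, a2, a3, a4⟩ := this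
      subst a1
      exact ⟨a3, rfl, by simpa using a2, a4⟩
    · simp only [B_add_left, B_smul_left, T_smul2, T_self23, B_self, hR]
      linear_combination hsum
    · simp only [T_add2, T_smul2, T_self23, h1]
      have : T c P n R = 0 := by rw [← hf]; simp only [T]; ring
      rw [this]; ring
  · have li : ∀ r : L, I2 P (n + r • R) := by
      intro r s t h
      have := hI t (t * r) s 0 (by rw [← h]; module)
      exact ⟨this.2.2.1, this.1⟩
    have li0 : I2 P R := by
      intro s t h
      have := hI 0 t s 0 (by rw [← h]; module)
      exact ⟨this.2.2.1, this.2.1⟩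
    have hon : ∀ q : Fin 4 → L, OnLine (Submodule.span L {P, q}) p := by
      intro q
      rw [OnLine, ha]
      exact Submodule.smul_mem _ _ (Submodule.subset_span (by simp))
    have hne0 : ∀ r : L, Submodule.span L {P, R} ≠ Submodule.span L {P, n + r • R} := by
      intro r h
      have hm : n + r • R ∈ Submodule.span L {P, R} := by
        rw [h]; exact Submodule.subset_span (by simp)
      obtain ⟨s, t, hst⟩ := Submodule.mem_span_pair.mp hm
      have := hI 1 (r - t) (-s) 0 (by
        have e : (1 : L) • n + (r - t) • R + (-s) • P + (0 : L) • m
          = (n + r • R) - (s • P + t • R) := by module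
        rw [e, hst, sub_self])
      exact one_ne_zero this.1
    refine ⟨Submodule.span L {P, R}, Submodule.span L {P, n + r • R},
      Submodule.span L {P, n + r' • R}, hne0 r, hne0 r', ?_, ?_⟩
    · intro h
      have hm : n + r • R ∈ Submodule.span L {P, n + r' • R} := by
        rw [← h]; exact Submodule.subset_span (by simp)
      obtain ⟨s, t, hst⟩ := Submodule.mem_span_pair.mp hm
      have := hI (1 - t) (r - t * r') (-s) 0 (by
        have e : (1 - t : L) • n + (r - t * r') • R + (-s) • P + (0 : L) • m
          = (n + r • R) - (s • P + t • (n + r' • R)) := by module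
        rw [e, hst, sub_self])
      apply hrr
      linear_combination this.2.1 - r' * this.1
    · rintro W (rfl | rfl | rfl)
      · exact ⟨li0.line, line_on hP hR h2 h1, hon _⟩
      · exact ⟨(li r).line, line_on hP q1 q3 q2, hon _⟩
      · exact ⟨(li r').line, line_on hP q1' q3' q2', hon _⟩

end closed

section main

variable {K : Type*} [Field K]

lemma main_aux (hK : 13 ≤ Cardinal.mk K) (c : Fin 4 → Fin 4 → Fin 4 → K)
    (hF : IsSmoothHypersurf (cubF c))
    (W : Submodule K (Fin 4 → K)) (hl : IsLine W) (hS : LineOnSurf (cubF c) W)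
    (P : Projectivization K (Fin 4 → K)) (hPW : OnLine W P)
    (hPE : ¬ IsEckardt (cubF c) P) :
    linePts W ⊆ GammaPts (cubF c) P ∧ GammaPts (cubF c) P ⊆ Span (cubF c) {P} := by
  have hline : ∀ u ∈ W, ∀ v ∈ W, N c u = 0 ∧ B c u v = 0 := by
    intro u hu v hv
    have h := hS u v hu hv
    rw [lineRestrict_cubF] at h
    have := binary_eq_zero h
    exact ⟨this.1, this.2.1⟩
  refine ⟨?_, ?_⟩
  · intro Q hQ
    refine ⟨?_, ?_⟩
    · show eval Q.rep (cubF c) = 0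
      rw [eval_cubF]; exact (hline _ hQ _ hQ).1
    · show tangentEval (cubF c) P Q = 0
      rw [tangentEval, pderiv_cubF]
      exact (hline _ hPW _ hQ).2
  · intro Q hQ
    obtain ⟨hQ1, hQ2⟩ := hQ
    have hQ1' : N c Q.rep = 0 := by
      rw [← eval_cubF]; exact hQ1
    have hQ2' : B c P.rep Q.rep = 0 := by
      rw [← pderiv_cubF]; exact hQ2
    have hp0 := P.rep_nonzero
    have hPbase : Sp c {P} P.rep := by
      intro h
      apply SpanMem.base
      rw [Projectivization.mk_rep]
      rfl
    obtain ⟨R, hRW, hPR⟩ : ∃ R ∈ W, I2 P.rep R := by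
      have h1 : 1 < Module.finrank K W := by rw [hl]; norm_num
      have hx : (⟨P.rep, hPW⟩ : W) ≠ 0 := by
        intro h; exact hp0 (congrArg Subtype.val h)
      obtain ⟨y, hy⟩ := exists_linearIndependent_pair_of_one_lt_finrank h1 hx
      refine ⟨y.1, y.2, ?_⟩
      rw [LinearIndependent.pair_iff] at hy
      intro s t h
      exact hy s t (Subtype.ext h)
    have hSm := sm_base hF
    have hP := (hline _ hPW _ hPW).1
    have hR := (hline _ hRW _ hRW).1
    have h1 := (hline _ hRW _ hPW).2
    have h2 := (hline _ hPW _ hRW).2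
    obtain ⟨m, hm⟩ := hSm _ hp0 hP
    have hBP : B c P.rep P.rep = 0 := by rw [B_self, hP]; ring
    have hli : LinearIndependent K ![R, P.rep, m] := by
      rw [Fintype.linearIndependent_iff]
      intro g hg
      rw [Fin.sum_univ_three] at hg
      have e : g 0 • R + g 1 • P.rep + g 2 • m = 0 := hg
      have e2 : B c P.rep (g 0 • R + g 1 • P.rep + g 2 • m) = g 2 * B c P.rep m := by
        simp only [B_add_right, B_smul_right, h2, hBP]; ring
      have e3 : g 2 = 0 := by
        rw [e] at e2
        have e4 : B c P.rep 0 = 0 := by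
          have := B_smul_right c (0 : K) P.rep (0 : Fin 4 → K)
          simpa using this
        rw [e4] at e2
        exact (mul_eq_zero.mp e2.symm).resolve_right hm
      rw [e3, zero_smul, add_zero, add_comm] at e
      have e5 := hPR _ _ e
      intro i
      fin_cases i
      · exact e5.2
      · exact e5.1
      · exact e3
    obtain ⟨k, hk⟩ := exists_linearIndependent_cons_of_lt_finrank hli
      (by simp : 3 < Module.finrank K (Fin 4 → K))
    have hk4 : I4 k R P.rep m := I4.of_li hk
    obtain ⟨q, hq⟩ : ∃ q, q = B c P.rep k / B c P.rep m := ⟨_, rfl⟩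
    obtain ⟨n, hnd⟩ : ∃ n, n = k + (-q) • m := ⟨_, rfl⟩
    have hn : B c P.rep n = 0 := by
      rw [hnd, B_add_right, B_smul_right, hq]; field_simp; ring
    have hI : I4 n R P.rep m := by
      intro s t x y h
      have := hk4 s t x (y - s * q) (by rw [← h, hnd]; module)
      obtain ⟨a1, a2, a3, a4⟩ := this
      subst a1
      exact ⟨rfl, a2, a3, by simpa using a4⟩
    have key : dsc c n R P.rep = 0 → T c n R P.rep ≠ 0 := by
      intro hd hT
      let φ := algebraMap K (AlgebraicClosure K)
      have hprod : B c R n * B c n P.rep ^ 2 = 0 := by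
        simp only [dsc, disc, hn, hT] at hd
        linear_combination -hd
      have hIφ := hI.map φ
      have hSφ := sm_closure hF
      have hT' : T c R P.rep n = 0 := by rw [← hT]; simp only [T]; ring
      by_cases hb : B c R n = 0
      · refine no_double hSφ hIφ.swap12.swap23 ?_ ?_ ?_ ?_ ?_ ?_ ?_
        · rw [N_map, hR, map_zero]
        · rw [N_map, hP, map_zero]
        · rw [B_map, h1, map_zero]
        · rw [B_map, h2, map_zero]
        · rw [B_map, hb, map_zero]
        · rw [B_map, hn, map_zero]
        · rw [T_map, hT', map_zero]
      · have hg : B c n P.rep = 0 := by simpa [hb] using hprod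
        apply hPE
        rw [IsEckardt, clF, map_cubF]
        refine eckardt_of hSφ hIφ ?_ ?_ ?_ ?_ ?_ ?_ ?_ ?_ _ ?_
        · rw [N_map, hR, map_zero]
        · rw [N_map, hP, map_zero]
        · rw [B_map, h1, map_zero]
        · rw [B_map, h2, map_zero]
        · rw [B_map, hn, map_zero]
        · rw [T_map, hT, map_zero]
        · rw [B_map, hg, map_zero]
        · rw [B_map]
          exact fun h => hb ((map_eq_zero φ).mp h)
        · obtain ⟨a, ha⟩ := Projectivization.exists_smul_eq_mk_rep (AlgebraicClosure K)
            (clVec φ P.rep) (clVec_ne_zero φ hp0)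
          exact ⟨a, ha.symm⟩
    obtain ⟨x, y, w, t, hcomb⟩ := hI.comb Q.rep
    have ht : t = 0 := by
      rw [hcomb] at hQ2'
      simp only [B_add_right, B_smul_right, hn, h2, hBP] at hQ2'
      have : t * B c P.rep m = 0 := by linear_combination hQ2'
      exact (mul_eq_zero.mp this).resolve_right hm
    rw [ht, zero_smul, add_zero] at hcomb
    have hfin : Sp c {P} Q.rep := by
      rw [hcomb] at hQ1' ⊢
      by_cases hd : dsc c n R P.rep = 0
      · exact caseB_all hK hSm hI hR hP h1 h2 hn hd (key hd) hPbase x y w hQ1'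
      · exact caseA_all hK hSm hI hR hP h1 h2 hn hd hPbase x y w hQ1'
    have := hfin Q.rep_nonzero
    rw [Projectivization.mk_rep] at this
    exact this

end main

end CubicSurfProof

open CubicSurf MvPolynomial in
/-- Let `K` be a field with at least 13 elements, `S` a smooth cubic
surface over `K`, `ℓ` a `K`-line contained in `S`, and `P ∈ ℓ(K)` a point that is not an
Eckardt point. Then `ℓ(K) ⊆ Γ_P(K) ⊆ Span({P})`. -/
theorem line_points_spanned_by_non_eckardt_point
    {K : Type*} [Field K] (hK : 13 ≤ Cardinal.mk K)
    (F : MvPolynomial (Fin 4) K) (hF : SmoothCubic F)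
    (W : Submodule K (Fin 4 → K)) (hl : IsLine W) (hS : LineOnSurf F W)
    (P : Projectivization K (Fin 4 → K)) (hPW : OnLine W P) (hPS : P ∈ zeroSet F)
    (hPE : ¬ IsEckardt F P) :
    linePts W ⊆ GammaPts F P ∧ GammaPts F P ⊆ Span F {P} := by
  obtain ⟨c, rfl⟩ := CubicSurfProof.exists_cubF F hF.1
  exact CubicSurfProof.main_aux hK c hF.2 W hl hS P hPW hPE
end
end

section
/- Let K be a field with at least 13 elements and S a smooth cubic surface in P^3 over K. Suppose S contains two skew K-lines ℓ and ℓ'. Then ℓ'(K) ⊆ Span(ℓ(K)). -/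
/- Common framework: points, lines, intersection divisors, the secant-tangent span,
the groups `H_S(K)`, geometric notions over the algebraic closure, and topologies. -/

open MvPolynomial

noncomputable section

namespace SkewAux

/-- First binary quadratic form with coefficients `a`. -/
def q1 {R : Type*} [CommRing R] (a : Fin 6 → R) (x y : R) : R :=
  a 0 * x ^ 2 + a 1 * (x * y) + a 2 * y ^ 2

/-- Second binary quadratic form with coefficients `a`. -/
def q2 {R : Type*} [CommRing R] (a : Fin 6 → R) (x y : R) : R :=
  a 3 * x ^ 2 + a 4 * (x * y) + a 5 * y ^ 2

/-- The symmetric bilinear form (Bezoutian) of the pair of quadratic forms. -/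
def bz {R : Type*} [CommRing R] (a : Fin 6 → R) (x1 x2 y1 y2 : R) : R :=
  (a 0 * a 4 - a 1 * a 3) * (x1 * y1) + (a 0 * a 5 - a 2 * a 3) * (x1 * y2 + x2 * y1)
    + (a 1 * a 5 - a 2 * a 4) * (x2 * y2)

/-- The bihomogeneous form attached to `a`. -/
def bf {R : Type*} [CommRing R] (a : Fin 6 → R) (x1 x2 y1 y2 : R) : R :=
  q1 a x1 x2 * y1 + q2 a x1 x2 * y2

/-- The quintic whose nonvanishing makes the tangent plane section irreducible enough. -/
def th {R : Type*} [CommRing R] (a b : Fin 6 → R) (y1 y2 : R) : R :=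
  bz b (-(q2 a (-(q2 b y1 y2)) (q1 b y1 y2))) (q1 a (-(q2 b y1 y2)) (q1 b y1 y2)) y1 y2

/-- The quintic `B(x, γ(x))`. -/
def ph {R : Type*} [CommRing R] (a b : Fin 6 → R) (x1 x2 : R) : R :=
  bf b (-(q2 a x1 x2)) (q1 a x1 x2) x1 x2

section maps
variable {R S : Type*} [CommRing R] [CommRing S] (f : R →+* S) (a b : Fin 6 → R)

lemma map_q1 (x y : R) : f (q1 a x y) = q1 (fun i => f (a i)) (f x) (f y) := by simp [q1]
lemma map_q2 (x y : R) : f (q2 a x y) = q2 (fun i => f (a i)) (f x) (f y) := by simp [q2]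
lemma map_bz (x y z w : R) : f (bz a x y z w) = bz (fun i => f (a i)) (f x) (f y) (f z) (f w) := by
  simp [bz]
lemma map_bf (x y z w : R) : f (bf a x y z w) = bf (fun i => f (a i)) (f x) (f y) (f z) (f w) := by
  simp [bf, map_q1, map_q2]
lemma map_th (x y : R) :
    f (th a b x y) = th (fun i => f (a i)) (fun i => f (b i)) (f x) (f y) := by
  simp [th, map_bz, map_q1, map_q2]
lemma map_ph (x y : R) :
    f (ph a b x y) = ph (fun i => f (a i)) (fun i => f (b i)) (f x) (f y) := by
  simp [ph, map_bf, map_q1, map_q2]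
end maps

section degrees
open Polynomial
variable {K : Type*} [Field K] (a b : Fin 6 → K)

/-- Coefficients as constant polynomials. -/
noncomputable def cc (a : Fin 6 → K) : Fin 6 → K[X] := fun i => Polynomial.C (a i)

lemma deg_q1 {p q : K[X]} {d : ℕ} (hp : p.natDegree ≤ d) (hq : q.natDegree ≤ d) :
    (q1 (cc a) p q).natDegree ≤ 2 * d := by
  unfold q1 cc
  have h1 : (p ^ 2).natDegree ≤ 2 * d := natDegree_pow_le_of_le 2 hp
  have h2 : (q ^ 2).natDegree ≤ 2 * d := natDegree_pow_le_of_le 2 hq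
  have h3 : (p * q).natDegree ≤ 2 * d := by
    have := natDegree_mul_le_of_le hp hq
    omega
  refine natDegree_add_le_of_degree_le (natDegree_add_le_of_degree_le ?_ ?_) ?_
  · exact (natDegree_C_mul_le _ _).trans h1
  · exact (natDegree_C_mul_le _ _).trans h3
  · exact (natDegree_C_mul_le _ _).trans h2

lemma deg_q2 {p q : K[X]} {d : ℕ} (hp : p.natDegree ≤ d) (hq : q.natDegree ≤ d) :
    (q2 (cc a) p q).natDegree ≤ 2 * d :=
  deg_q1 (fun i => a (i + 3)) hp hq

lemma deg_bf {p q r s : K[X]} {d e : ℕ} (hp : p.natDegree ≤ d) (hq : q.natDegree ≤ d)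
    (hr : r.natDegree ≤ e) (hs : s.natDegree ≤ e) :
    (bf (cc a) p q r s).natDegree ≤ 2 * d + e := by
  unfold bf
  exact natDegree_add_le_of_degree_le (natDegree_mul_le_of_le (deg_q1 a hp hq) hr)
    (natDegree_mul_le_of_le (deg_q2 a hp hq) hs)

lemma deg_bz {p q r s : K[X]} {d e : ℕ} (hp : p.natDegree ≤ d) (hq : q.natDegree ≤ d)
    (hr : r.natDegree ≤ e) (hs : s.natDegree ≤ e) :
    (bz (cc a) p q r s).natDegree ≤ d + e := by
  unfold bz cc
  simp only [← Polynomial.C_mul, ← Polynomial.C_sub]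
  refine natDegree_add_le_of_degree_le (natDegree_add_le_of_degree_le ?_ ?_) ?_
  · exact (natDegree_C_mul_le _ _).trans (natDegree_mul_le_of_le hp hr)
  · exact (natDegree_C_mul_le _ _).trans (natDegree_add_le_of_degree_le
      (natDegree_mul_le_of_le hp hs) (natDegree_mul_le_of_le hq hr))
  · exact (natDegree_C_mul_le _ _).trans (natDegree_mul_le_of_le hq hs)

lemma deg_th {p q : K[X]} {d : ℕ} (hp : p.natDegree ≤ d) (hq : q.natDegree ≤ d) :
    (th (cc a) (cc b) p q).natDegree ≤ 5 * d := by
  unfold th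
  have h1 : (-(q2 (cc b) p q)).natDegree ≤ 2 * d := by
    rw [natDegree_neg]; exact deg_q2 b hp hq
  have h2 := deg_q1 b hp hq
  have h3 : (-(q2 (cc a) (-(q2 (cc b) p q)) (q1 (cc b) p q))).natDegree ≤ 2 * (2 * d) := by
    rw [natDegree_neg]; exact deg_q2 a h1 h2
  exact (deg_bz b h3 (deg_q1 a h1 h2) hp hq).trans (by omega)

lemma deg_ph {p q : K[X]} {d : ℕ} (hp : p.natDegree ≤ d) (hq : q.natDegree ≤ d) :
    (ph (cc a) (cc b) p q).natDegree ≤ 5 * d := by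
  unfold ph
  have h3 : (-(q2 (cc a) p q)).natDegree ≤ 2 * d := by
    rw [natDegree_neg]; exact deg_q2 a hp hq
  exact (deg_bf b h3 (deg_q1 a hp hq) hp hq).trans (by omega)

end degrees

section alg
variable {k : Type*} [Field k]

/-- No common zero. -/
def NC (a : Fin 6 → k) : Prop := ∀ x y : k, q1 a x y = 0 → q2 a x y = 0 → x = 0 ∧ y = 0

/-- A quadratic form over an algebraically closed field has a nontrivial zero. -/
lemma exists_zero [IsAlgClosed k] (u v w : k) :
    ∃ x y : k, ¬ (x = 0 ∧ y = 0) ∧ u * x ^ 2 + v * (x * y) + w * y ^ 2 = 0 := by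
  by_cases hu : u = 0
  · exact ⟨1, 0, by simp, by simp [hu]⟩
  · have hd : (Polynomial.C u * Polynomial.X ^ 2 + Polynomial.C v * Polynomial.X
        + Polynomial.C w).degree ≠ 0 := by
      rw [Polynomial.degree_quadratic hu]; decide
    obtain ⟨t, ht⟩ := IsAlgClosed.exists_root _ hd
    refine ⟨t, 1, by simp, ?_⟩
    have : u * t ^ 2 + v * t + w = 0 := by simpa [Polynomial.IsRoot] using ht
    linear_combination this

/-- Surjectivity of the Gauss map. -/
lemma gauss_surj [IsAlgClosed k] (a : Fin 6 → k) (y1 y2 : k) :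
    ∃ x1 x2 : k, ¬ (x1 = 0 ∧ x2 = 0) ∧ bf a x1 x2 y1 y2 = 0 := by
  obtain ⟨x, y, h, h'⟩ := exists_zero (a 0 * y1 + a 3 * y2) (a 1 * y1 + a 4 * y2)
    (a 2 * y1 + a 5 * y2)
  refine ⟨x, y, h, ?_⟩
  unfold bf q1 q2
  linear_combination (1 : k) * h' + 0

/-- two proportional vectors -/
lemma prop_of_det {u v y1 y2 : k} (hy : ¬ (y1 = 0 ∧ y2 = 0)) (h : u * y1 + v * y2 = 0) :
    ∃ c, -v = c * y1 ∧ u = c * y2 := by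
  by_cases h1 : y1 = 0
  · have h2 : y2 ≠ 0 := fun h2 => hy ⟨h1, h2⟩
    subst h1
    have : v = 0 := by simpa [h2] using h
    exact ⟨u / y2, by simp [this], by field_simp⟩
  · refine ⟨-v / y1, by field_simp, ?_⟩
    field_simp
    linear_combination h

lemma th_smul (a b : Fin 6 → k) (c y1 y2 : k) : th a b (c * y1) (c * y2) = c ^ 5 * th a b y1 y2 := by
  unfold th bz q1 q2; ring

lemma ph_smul (a b : Fin 6 → k) (c y1 y2 : k) : ph a b (c * y1) (c * y2) = c ^ 5 * ph a b y1 y2 := by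
  unfold ph bf q1 q2; ring

lemma ph_beta (a b : Fin 6 → k) (y1 y2 : k) :
    ph a b (-(q2 b y1 y2)) (q1 b y1 y2) = bf a (-(q2 b y1 y2)) (q1 b y1 y2) y1 y2 * th a b y1 y2 := by
  unfold ph th
  generalize hg1 : q1 a (-(q2 b y1 y2)) (q1 b y1 y2) = g1
  generalize hg2 : q2 a (-(q2 b y1 y2)) (q1 b y1 y2) = g2
  unfold bf
  rw [hg1, hg2]
  unfold bz q1 q2
  ring

/-- `ph` is not identically zero. -/
lemma ph_ne [IsAlgClosed k] (a b : Fin 6 → k) (ha : NC a) (hb : NC b) :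
    ph (cc a) (cc b) (Polynomial.X : Polynomial k) 1 ≠ 0 := by
  intro h
  set g1 : Polynomial k := -(q2 (cc a) Polynomial.X 1) with hg1
  set g2 : Polynomial k := q1 (cc a) Polynomial.X 1 with hg2
  set p : Polynomial k := q1 (cc b) g1 g2 with hp
  set q : Polynomial k := q2 (cc b) g1 g2 with hq
  have hpq : p * Polynomial.X + q = 0 := by
    have : ph (cc a) (cc b) (Polynomial.X : Polynomial k) 1 = p * Polynomial.X + q * 1 := rfl
    rw [h] at this; simpa using this.symm
  have hX : (Polynomial.X : Polynomial k).natDegree ≤ 1 := Polynomial.natDegree_X_le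
  have h1 : (1 : Polynomial k).natDegree ≤ 1 := by simp
  have d1 : g1.natDegree ≤ 2 := by
    rw [hg1, Polynomial.natDegree_neg]; exact deg_q2 a hX h1
  have d2 : g2.natDegree ≤ 2 := deg_q1 a hX h1
  have dq : q.natDegree ≤ 4 := deg_q2 b d1 d2
  have dp : p.natDegree ≤ 4 := deg_q1 b d1 d2
  have e1 : ∀ t, g1.eval t = -(q2 a t 1) := by
    intro t
    have := map_q2 (Polynomial.evalRingHom t) (cc a) Polynomial.X 1
    simp [cc] at this
    simp [hg1, this]
  have e2 : ∀ t, g2.eval t = q1 a t 1 := by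
    intro t
    have := map_q1 (Polynomial.evalRingHom t) (cc a) Polynomial.X 1
    simp [cc] at this
    simp [hg2, this]
  have ep : ∀ t, p.eval t = q1 b (-(q2 a t 1)) (q1 a t 1) := by
    intro t
    have := map_q1 (Polynomial.evalRingHom t) (cc b) g1 g2
    simp [cc] at this
    rw [← e1, ← e2, hp, ← this]
  have eq : ∀ t, q.eval t = q2 b (-(q2 a t 1)) (q1 a t 1) := by
    intro t
    have := map_q2 (Polynomial.evalRingHom t) (cc b) g1 g2
    simp [cc] at this
    rw [← e1, ← e2, hq, ← this]
  have noroot : ∀ t, p.eval t ≠ 0 := by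
    intro t ht
    have hqt : q.eval t = 0 := by
      have := congrArg (Polynomial.eval t) hpq
      simpa [ht] using this
    rw [ep] at ht
    rw [eq] at hqt
    obtain ⟨hh1, hh2⟩ := hb _ _ ht hqt
    have := ha t 1 hh2 (by simpa using hh1)
    exact one_ne_zero this.2
  have hpdeg : p.degree = 0 := by
    by_contra hne
    obtain ⟨t, ht⟩ := IsAlgClosed.exists_root p hne
    exact noroot t ht
  have hpc := Polynomial.eq_C_of_degree_eq_zero hpdeg
  -- value at infinity
  have cg1 : g1.coeff 2 = -(a 3) := by
    simp [hg1, q2, cc]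
  have cg2 : g2.coeff 2 = a 0 := by
    simp [hg2, q1, cc]
  have csq : ∀ r : Polynomial k, ∀ s : Polynomial k, r.natDegree ≤ 2 → s.natDegree ≤ 2 →
      (r * s).coeff 4 = r.coeff 2 * s.coeff 2 := by
    intro r s hr hs
    exact Polynomial.coeff_mul_add_eq_of_natDegree_le hr hs
  have cp : p.coeff 4 = q1 b (-(a 3)) (a 0) := by
    rw [hp]; unfold q1 cc
    simp only [Polynomial.coeff_add, Polynomial.coeff_C_mul, pow_two, csq _ _ d1 d1,
      csq _ _ d1 d2, csq _ _ d2 d2, cg1, cg2]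
  have cq : q.coeff 4 = q2 b (-(a 3)) (a 0) := by
    rw [hq]; unfold q2 cc
    simp only [Polynomial.coeff_add, Polynomial.coeff_C_mul, pow_two, csq _ _ d1 d1,
      csq _ _ d1 d2, csq _ _ d2 d2, cg1, cg2]
  have hp4 : p.coeff 4 = 0 := by rw [hpc]; simp
  have hq4 : q.coeff 4 = 0 := by
    have hqe : q = -(p * Polynomial.X) := by linear_combination hpq
    rw [hqe, hpc, Polynomial.coeff_neg, Polynomial.coeff_C_mul]
    simp [Polynomial.coeff_X]
  rw [cp] at hp4
  rw [cq] at hq4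
  obtain ⟨hh1, hh2⟩ := hb _ _ hp4 hq4
  have := ha 1 0 (by simp [q1, hh2]) (by simp [q2]; simpa using hh1)
  exact one_ne_zero this.1

/-- existence of a point where `th ∘ γ` is nonzero -/
lemma exists_th_gamma [IsAlgClosed k] (a b : Fin 6 → k) (ha : NC a) (hb : NC b) :
    ∃ t : k, th a b (-(q2 a t 1)) (q1 a t 1) ≠ 0 := by
  by_contra! hcon
  have hne := ph_ne a b ha hb
  have hev : ∀ s, (ph (cc a) (cc b) (Polynomial.X : Polynomial k) 1).eval s = ph a b s 1 := by
    intro s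
    have := map_ph (Polynomial.evalRingHom s) (cc a) (cc b) Polynomial.X 1
    simpa [cc] using this
  -- a further excluded value
  set u1 := -(q2 b (-(a 3)) (a 0)) with hu1
  set u2 := q1 b (-(a 3)) (a 0) with hu2
  have hlin : (Polynomial.C u2 * Polynomial.X - Polynomial.C u1 : Polynomial k) ≠ 0 := by
    intro h
    have c0 := congrArg (fun p => Polynomial.coeff p 0) h
    have c1 := congrArg (fun p => Polynomial.coeff p 1) h
    simp [Polynomial.coeff_C] at c0 c1
    obtain ⟨hh1, hh2⟩ := hb (-(a 3)) (a 0) c1 (by simpa [hu1] using c0)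
    have := ha 1 0 (by simp [q1, hh2]) (by simp [q2]; simpa using hh1)
    exact one_ne_zero this.1
  obtain ⟨s, hs⟩ := Polynomial.exists_eval_ne_zero_of_natDegree_lt_card _ (mul_ne_zero hne hlin) 
    (lt_of_lt_of_le (Cardinal.natCast_lt_aleph0) (Cardinal.aleph0_le_mk k))
  rw [Polynomial.eval_mul, hev] at hs
  have hs1 : ph a b s 1 ≠ 0 := left_ne_zero_of_mul hs
  have hs2 : u2 * s - u1 ≠ 0 := by simpa using right_ne_zero_of_mul hs
  obtain ⟨y1, y2, hy, hy'⟩ := gauss_surj b s 1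
  obtain ⟨c, hc1, hc2⟩ := prop_of_det (u := q1 b y1 y2) (v := q2 b y1 y2) (y1 := s) (y2 := 1)
    (by simp) hy'
  have hc : c ≠ 0 := by
    rintro rfl
    exact hy (hb y1 y2 (by simpa using hc2) (by simpa using hc1))
  have hth : th a b y1 y2 ≠ 0 := by
    have := ph_beta a b y1 y2
    rw [hc1, hc2, ph_smul] at this
    intro h0
    rw [h0, mul_zero] at this
    exact mul_ne_zero (pow_ne_zero 5 hc) hs1 this
  obtain ⟨x1, x2, hx, hx'⟩ := gauss_surj a y1 y2
  obtain ⟨d, hd1, hd2⟩ := prop_of_det (u := q1 a x1 x2) (v := q2 a x1 x2) hy hx'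
  by_cases hx2 : x2 = 0
  · subst hx2
    have hx1 : x1 ≠ 0 := fun h => hx ⟨h, rfl⟩
    -- then `y` is proportional to `γ(1,0)`, contradiction with the choice of `s`
    have hd : d ≠ 0 := by
      rintro rfl
      exact hx (ha x1 0 (by simpa using hd2) (by simpa using hd1))
    have e1 : d * y1 = x1 ^ 2 * (-(a 3)) := by rw [← hd1]; unfold q2; ring
    have e2 : d * y2 = x1 ^ 2 * a 0 := by rw [← hd2]; unfold q1; ring
    have f1 : d ^ 2 * q1 b y1 y2 = x1 ^ 4 * u2 := by
      have : d ^ 2 * q1 b y1 y2 = q1 b (d * y1) (d * y2) := by unfold q1; ring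
      rw [this, e1, e2, hu2]; unfold q1; ring
    have f2 : d ^ 2 * -(q2 b y1 y2) = x1 ^ 4 * u1 := by
      have : d ^ 2 * -(q2 b y1 y2) = -(q2 b (d * y1) (d * y2)) := by unfold q2; ring
      rw [this, e1, e2, hu1]; unfold q2; ring
    rw [hc2] at f1
    rw [hc1] at f2
    have : x1 ^ 4 * (u2 * s - u1) = 0 := by linear_combination f2 - s * f1
    exact mul_ne_zero (pow_ne_zero 4 hx1) hs2 this
  · have hd : d ≠ 0 := by
      rintro rfl
      exact hx (ha x1 x2 (by simpa using hd2) (by simpa using hd1))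
    have h0 := hcon (x1 / x2)
    have g1 : -(q2 a (x1 / x2) 1) = (d / x2 ^ 2) * y1 := by
      have : -(q2 a (x1 / x2) 1) = -(q2 a x1 x2) / x2 ^ 2 := by unfold q2; field_simp; 
      rw [this, hd1]; ring
    have g2 : q1 a (x1 / x2) 1 = (d / x2 ^ 2) * y2 := by
      have : q1 a (x1 / x2) 1 = q1 a x1 x2 / x2 ^ 2 := by unfold q1; field_simp; 
      rw [this, hd2]; ring
    rw [g1, g2, th_smul] at h0
    exact mul_ne_zero (pow_ne_zero 5 (div_ne_zero hd (pow_ne_zero 2 hx2))) hth h0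

end alg
section core
open Polynomial
variable {K : Type*} [Field K]

lemma NC_down {L : Type*} [Field L] (f : K →+* L) {a : Fin 6 → K} (h : NC (fun i => f (a i))) :
    NC a := by
  intro x y h1 h2
  have := h (f x) (f y) (by rw [← map_q1, h1, map_zero]) (by rw [← map_q2, h2, map_zero])
  simpa using this

lemma quad_ne_zero {u v w : K} (h : Polynomial.C u * Polynomial.X ^ 2 + Polynomial.C v * Polynomial.X + Polynomial.C w = (0 : K[X])) :
    u = 0 ∧ v = 0 ∧ w = 0 := by
  have c0 := congrArg (fun p => Polynomial.coeff p 0) h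
  have c1 := congrArg (fun p => Polynomial.coeff p 1) h
  have c2 := congrArg (fun p => Polynomial.coeff p 2) h
  simp [Polynomial.coeff_X, Polynomial.coeff_C] at c0 c1 c2
  exact ⟨c2, c1, c0⟩

/-- For a pair of forms without common zeros over the closure, the minors do not all vanish. -/
lemma minors_ne {k : Type*} [Field k] [IsAlgClosed k] {a : Fin 6 → k} (ha : NC a)
    (h1 : a 0 * a 4 - a 1 * a 3 = 0) (h2 : a 0 * a 5 - a 2 * a 3 = 0)
    (h3 : a 1 * a 5 - a 2 * a 4 = 0) : False := by
  by_cases hz : a 0 = 0 ∧ a 1 = 0 ∧ a 2 = 0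
  · obtain ⟨z0, z1, z2⟩ := hz
    obtain ⟨x, y, hxy, h⟩ := exists_zero (a 3) (a 4) (a 5)
    exact hxy (ha x y (by simp [q1, z0, z1, z2]) h)
  · obtain ⟨x, y, hxy, h⟩ := exists_zero (a 0) (a 1) (a 2)
    refine hxy (ha x y h ?_)
    have e0 : a 0 * q2 a x y = 0 := by
      unfold q2; linear_combination a 3 * h + (x * y) * h1 + y ^ 2 * h2
    have e1 : a 1 * q2 a x y = 0 := by
      unfold q2; linear_combination a 4 * h - x ^ 2 * h1 + y ^ 2 * h3
    have e2 : a 2 * q2 a x y = 0 := by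
      unfold q2; linear_combination a 5 * h - x ^ 2 * h2 - (x * y) * h3
    by_contra hq
    apply hz
    simp only [mul_eq_zero, hq, or_false] at e0 e1 e2
    exact ⟨e0, e1, e2⟩

/-- A nontrivial combination of the two forms is a nonzero polynomial. -/
lemma comb_ne {k : Type*} [Field k] [IsAlgClosed k] {a : Fin 6 → k} (ha : NC a) {u v : k}
    (huv : ¬ (u = 0 ∧ v = 0)) (h0 : u * a 0 + v * a 3 = 0) (h1 : u * a 1 + v * a 4 = 0)
    (h2 : u * a 2 + v * a 5 = 0) : False := by
  by_cases hu : u = 0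
  · have hv : v ≠ 0 := fun h => huv ⟨hu, h⟩
    simp only [hu, zero_mul, zero_add, mul_eq_zero, hv, false_or] at h0 h1 h2
    apply minors_ne ha <;> simp [h0, h1, h2]
  · apply minors_ne ha <;> apply mul_left_cancel₀ hu
    · linear_combination a 4 * h0 - a 3 * h1
    · linear_combination a 5 * h0 - a 3 * h2
    · linear_combination a 5 * h1 - a 4 * h2

lemma two_roots {y1 y2 u1 u2 v1 v2 : K} (h1 : y1 * u1 + y2 * u2 = 0) (h2 : y1 * v1 + y2 * v2 = 0)
    (hd : u1 * v2 - u2 * v1 ≠ 0) : y1 = 0 ∧ y2 = 0 := by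
  constructor <;> apply mul_right_cancel₀ hd
  · linear_combination v2 * h1 - u2 * h2
  · linear_combination u1 * h2 - v1 * h1

theorem core (hK : 13 ≤ Cardinal.mk K) (a b : Fin 6 → K)
    (ha : NC (fun i => algebraMap K (AlgebraicClosure K) (a i)))
    (hb : NC (fun i => algebraMap K (AlgebraicClosure K) (b i)))
    (Y : K → K → Prop)
    (h1 : ∀ x1 x2 y1 y2, ¬ (y1 = 0 ∧ y2 = 0) → bf a x1 x2 y1 y2 = 0 → bf b y1 y2 x1 x2 ≠ 0 → Y y1 y2)
    (h2 : ∀ z1 z2 y1 y2, ¬ (z1 = 0 ∧ z2 = 0) → Y z1 z2 → th a b z1 z2 ≠ 0 →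
      bf b y1 y2 (-(q2 b z1 z2)) (q1 b z1 z2) ≠ 0 → Y y1 y2)
    (y1 y2 : K) (hy : ¬ (y1 = 0 ∧ y2 = 0)) : Y y1 y2 := by
  classical
  set f := algebraMap K (AlgebraicClosure K) with hf
  have ha' : NC a := NC_down f ha
  have hb' : NC b := NC_down f hb
  have hX : (Polynomial.X : K[X]).natDegree ≤ 1 := Polynomial.natDegree_X_le
  have h1d : (1 : K[X]).natDegree ≤ 1 := by simp
  have gne : ∀ t, ¬ (-(q2 a t 1) = 0 ∧ q1 a t 1 = 0) := by
    rintro t ⟨e1, e2⟩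
    exact one_ne_zero (ha' t 1 e2 (by simpa using e1)).2
  -- the polynomial `th ∘ γ`
  obtain ⟨τ, hτ⟩ := exists_th_gamma _ _ ha hb
  have mapcc : ∀ c : Fin 6 → K, ∀ t : AlgebraicClosure K,
      (fun i => (eval₂RingHom f t) (cc c i)) = fun i => f (c i) := by
    intro c t; funext i; simp [cc]
  have evcc : ∀ c : Fin 6 → K, ∀ t : K, (fun i => (Polynomial.evalRingHom t) (cc c i)) = c := by
    intro c t; funext i; simp [cc]
  -- first step: a good starting point
  have start : ∃ z1 z2, ¬ (z1 = 0 ∧ z2 = 0) ∧ Y z1 z2 ∧ th a b z1 z2 ≠ 0 := by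
    by_cases hJ : a 0 * a 4 - a 1 * a 3 = 0 ∧ 2 * (a 0 * a 5 - a 2 * a 3) = 0 ∧
        a 1 * a 5 - a 2 * a 4 = 0
    · -- inseparable case
      obtain ⟨j1, j2, j3⟩ := hJ
      have hm : a 0 * a 5 - a 2 * a 3 ≠ 0 := by
        intro hm
        refine minors_ne ha ?_ ?_ ?_ <;>
          simp only [← map_mul, ← map_sub, j1, hm, j3, map_zero]
      have two : (2 : K) = 0 := by
        rcases mul_eq_zero.mp j2 with h | h
        · exact h
        · exact absurd h hm
      have z4 : a 4 = 0 := by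
        apply mul_right_cancel₀ hm
        linear_combination a 5 * j1 + a 3 * j3
      have z1 : a 1 = 0 := by
        apply mul_right_cancel₀ hm
        linear_combination a 2 * j1 + a 0 * j3
      let g1 : K[X] := -(Polynomial.C (a 3) * Polynomial.X + Polynomial.C (a 5))
      let g2 : K[X] := Polynomial.C (a 0) * Polynomial.X + Polynomial.C (a 2)
      let h : K[X] := th (cc a) (cc b) g1 g2
      have dg1 : g1.natDegree ≤ 1 := by
        simp only [g1, Polynomial.natDegree_neg]; exact Polynomial.natDegree_linear_le
      have dg2 : g2.natDegree ≤ 1 := Polynomial.natDegree_linear_le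
      have dh : h.natDegree ≤ 5 := deg_th a b dg1 dg2
      have evh : ∀ t, h.eval (t ^ 2) = th a b (-(q2 a t 1)) (q1 a t 1) := by
        intro t
        have := map_th (Polynomial.evalRingHom (t ^ 2)) (cc a) (cc b) g1 g2
        rw [evcc, evcc] at this
        simp only [Polynomial.coe_evalRingHom] at this
        simp only [h]
        rw [this]
        simp [g1, g2, q1, q2, z1, z4]
      have hne : h ≠ 0 := by
        intro h0
        apply hτ
        have := map_th (eval₂RingHom f (τ ^ 2)) (cc a) (cc b) g1 g2
        rw [mapcc, mapcc] at this
        simp only [h] at h0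
        rw [h0, map_zero] at this
        rw [this]
        simp [g1, g2, q1, q2, z1, z4]
      let p : K[X] := ph (cc a) (cc b) Polynomial.X 1
      have dp : p.natDegree ≤ 5 := deg_ph a b hX h1d
      have evp : ∀ t, p.eval t = ph a b t 1 := by
        intro t
        have := map_ph (Polynomial.evalRingHom t) (cc a) (cc b) Polynomial.X 1
        rw [evcc, evcc] at this
        simpa using this
      have pne : p ≠ 0 := by
        intro h0
        apply ph_ne _ _ ha hb
        have := map_ph (mapRingHom f) (cc a) (cc b) Polynomial.X 1
        have e : ∀ c : Fin 6 → K, (fun i => (mapRingHom f) (cc c i)) = cc (fun i => f (c i)) := by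
          intro c; funext i; simp [cc]
        rw [e, e] at this
        simp only [p] at h0
        rw [h0, map_zero] at this
        simpa using this.symm
      have ex : ∃ t : K, h.eval (t ^ 2) ≠ 0 ∧ p.eval t ≠ 0 := by
        by_contra! hcon
        obtain ⟨T, hT⟩ := Cardinal.exists_finset_eq_card (α := K) (n := 13) (by exact_mod_cast hK)
        have hsub : T ⊆ (T.filter fun t => h.eval (t ^ 2) = 0) ∪ p.roots.toFinset := by
          intro t ht
          by_cases hh : h.eval (t ^ 2) = 0
          · simp [ht, hh]
          · simp [pne, hcon t hh]
        have c1 : (T.filter fun t => h.eval (t ^ 2) = 0).card ≤ 5 := by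
          refine le_trans (Finset.card_le_card_of_injOn (t := h.roots.toFinset) (fun t => t ^ 2) ?_ ?_)
            (le_trans (Multiset.toFinset_card_le _) (le_trans (card_roots' _) dh))
          · intro t ht
            have : h.eval (t ^ 2) = 0 := by
              have := Finset.mem_filter.mp ht
              exact this.2
            simp [hne, this]
          · intro s _ t _ hst
            have hst' : s ^ 2 = t ^ 2 := hst
            have : (s - t) ^ 2 = 0 := by linear_combination hst' + (t ^ 2 - s * t) * two
            exact sub_eq_zero.mp (pow_eq_zero_iff (two_ne_zero) |>.mp this)
        have c2 : p.roots.toFinset.card ≤ 5 :=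
          le_trans (Multiset.toFinset_card_le _) (le_trans (card_roots' _) dp)
        have := Finset.card_le_card hsub
        have := Finset.card_union_le (T.filter fun t => h.eval (t ^ 2) = 0) p.roots.toFinset
        omega
      obtain ⟨t, ht1, ht2⟩ := ex
      refine ⟨_, _, gne t, h1 t 1 _ _ (gne t) ?_ ?_, ?_⟩
      · unfold bf; ring
      · rw [evp] at ht2; exact ht2
      · rw [evh] at ht1; exact ht1
    · -- separable case
      let g1 : K[X] := -(q2 (cc a) Polynomial.X 1)
      let g2 : K[X] := q1 (cc a) Polynomial.X 1
      let h : K[X] := th (cc a) (cc b) g1 g2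
      let J : K[X] := Polynomial.C (a 0 * a 4 - a 1 * a 3) * Polynomial.X ^ 2 + Polynomial.C (2 * (a 0 * a 5 - a 2 * a 3)) * Polynomial.X
        + Polynomial.C (a 1 * a 5 - a 2 * a 4)
      have Jne : J ≠ 0 := fun h0 => hJ (quad_ne_zero h0)
      have dg1 : g1.natDegree ≤ 2 := by
        simp only [g1, Polynomial.natDegree_neg]; exact deg_q2 a hX h1d
      have dg2 : g2.natDegree ≤ 2 := deg_q1 a hX h1d
      have dh : h.natDegree ≤ 10 := deg_th a b dg1 dg2
      have dJ : J.natDegree ≤ 2 := Polynomial.natDegree_quadratic_le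
      have evh : ∀ t, h.eval t = th a b (-(q2 a t 1)) (q1 a t 1) := by
        intro t
        have := map_th (Polynomial.evalRingHom t) (cc a) (cc b) g1 g2
        simp only [g1, g2, map_neg, map_q1, map_q2, evcc] at this
        simpa using this
      have hne : h ≠ 0 := by
        intro h0
        apply hτ
        have := map_th (eval₂RingHom f τ) (cc a) (cc b) g1 g2
        simp only [h] at h0
        rw [h0] at this
        simp only [g1, g2, map_neg, map_q1, map_q2, mapcc] at this
        simpa using this.symm
      obtain ⟨t, ht⟩ := exists_eval_ne_zero_of_natDegree_lt_card (h * J) (mul_ne_zero hne Jne) (by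
        refine lt_of_lt_of_le ?_ hK
        have : (h * J).natDegree ≤ 12 := Polynomial.natDegree_mul_le_of_le dh dJ
        exact_mod_cast Nat.lt_succ_of_le this)
      rw [Polynomial.eval_mul] at ht
      have ht1 := left_ne_zero_of_mul ht
      have ht2 := right_ne_zero_of_mul ht
      rw [evh] at ht1
      refine ⟨_, _, gne t, ?_, ht1⟩
      by_cases hB : bf b (-(q2 a t 1)) (q1 a t 1) t 1 = 0
      · refine h1 (-(bz a 0 1 t 1)) (bz a 1 0 t 1) _ _ (gne t) ?_ ?_
        · unfold bf bz q1 q2; ring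
        · intro hB2
          unfold bf at hB hB2
          have hd := two_roots hB hB2 (by
            have e : J.eval t = bz a t 1 t 1 := by simp [J, bz]; ring
            rw [e] at ht2
            have e2 : t * bz a 1 0 t 1 - 1 * -(bz a 0 1 t 1) = bz a t 1 t 1 := by
              unfold bz; ring
            rwa [e2])
          exact gne t (hb' _ _ hd.1 hd.2)
      · refine h1 t 1 _ _ (gne t) ?_ hB
        unfold bf; ring
  obtain ⟨z1, z2, hz, hYz, hth⟩ := start
  -- second step: a second good point, adapted to the target
  let T : K[X] := th (cc a) (cc b) Polynomial.X 1
  have dT : T.natDegree ≤ 5 := deg_th a b hX h1d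
  have evT : ∀ t, T.eval t = th a b t 1 := by
    intro t
    have := map_th (Polynomial.evalRingHom t) (cc a) (cc b) Polynomial.X 1
    rw [evcc, evcc] at this
    simpa using this
  let Q : K → K → K[X] := fun u v => Polynomial.C (u * b 0 + v * b 3) * Polynomial.X ^ 2 + Polynomial.C (u * b 1 + v * b 4) * Polynomial.X
    + Polynomial.C (u * b 2 + v * b 5)
  have dQ : ∀ u v, (Q u v).natDegree ≤ 2 := fun u v => Polynomial.natDegree_quadratic_le
  have Qne : ∀ u v, ¬ (u = 0 ∧ v = 0) → Q u v ≠ 0 := by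
    intro u v huv h0
    obtain ⟨e0, e1, e2⟩ := quad_ne_zero h0
    refine comb_ne hb (u := f u) (v := f v) (by simpa using huv) ?_ ?_ ?_ <;>
      simp only [← map_mul, ← map_add, e0, e1, e2, map_zero]
  have evQ : ∀ u v t, (Q u v).eval t = bf b t 1 u v := by
    intro u v t; simp [Q, bf, q1, q2]; ring
  have Tne : T ≠ 0 := by
    intro h0
    -- `th` vanishes at all points of the affine line over the closure
    have hall : ∀ s : AlgebraicClosure K, th (fun i => f (a i)) (fun i => f (b i)) s 1 = 0 := by
      intro s
      have := map_th (eval₂RingHom f s) (cc a) (cc b) Polynomial.X 1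
      rw [mapcc, mapcc] at this
      simp only [T] at h0
      rw [h0, map_zero] at this
      simpa using this.symm
    have hz1 : ∀ s : AlgebraicClosure K, s ≠ 0 →
        th (fun i => f (a i)) (fun i => f (b i)) 1 s = 0 := by
      intro s hs
      have := th_smul (fun i => f (a i)) (fun i => f (b i)) s (1 / s) 1
      rw [hall, mul_zero, mul_one, mul_one_div_cancel hs] at this
      exact this
    let P : (AlgebraicClosure K)[X] :=
      th (cc fun i => f (a i)) (cc fun i => f (b i)) 1 Polynomial.X
    have evP : ∀ s, P.eval s = th (fun i => f (a i)) (fun i => f (b i)) 1 s := by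
      intro s
      have := map_th (Polynomial.evalRingHom s) (cc fun i => f (a i)) (cc fun i => f (b i)) 1 Polynomial.X
      simpa [cc] using this
    have P0 : Polynomial.X * P = 0 := by
      apply Polynomial.funext
      intro s
      rw [Polynomial.eval_mul, evP, Polynomial.eval_X, Polynomial.eval_zero]
      by_cases hs : s = 0
      · rw [hs, zero_mul]
      · rw [hz1 s hs, mul_zero]
    have P00 : P = 0 := by
      rcases mul_eq_zero.mp P0 with h | h
      · exact absurd h Polynomial.X_ne_zero
      · exact h
    have hinf : th (fun i => f (a i)) (fun i => f (b i)) 1 0 = 0 := by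
      rw [← evP, P00, Polynomial.eval_zero]
    apply hτ
    generalize -(q2 (fun i => f (a i)) τ 1) = w1
    generalize q1 (fun i => f (a i)) τ 1 = w2
    by_cases hw : w2 = 0
    · have := th_smul (fun i => f (a i)) (fun i => f (b i)) w1 1 0
      rw [hinf, mul_zero, mul_one, mul_zero] at this
      rw [hw]; exact this
    · have := th_smul (fun i => f (a i)) (fun i => f (b i)) w2 (w1 / w2) 1
      rw [hall, mul_zero, mul_one, mul_div_cancel₀ _ hw] at this
      exact this
  have bz_ne : ∀ w1 w2, ¬ (w1 = 0 ∧ w2 = 0) → ¬ (-(q2 b w1 w2) = 0 ∧ q1 b w1 w2 = 0) := by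
    rintro w1 w2 hw ⟨e1, e2⟩
    exact hw (hb' _ _ e2 (by simpa using e1))
  obtain ⟨t, ht⟩ := exists_eval_ne_zero_of_natDegree_lt_card
      (T * Q (-(q2 b z1 z2)) (q1 b z1 z2) * Q (-(q2 b y1 y2)) (q1 b y1 y2))
      (mul_ne_zero (mul_ne_zero Tne (Qne _ _ (bz_ne _ _ hz))) (Qne _ _ (bz_ne _ _ hy))) (by
        refine lt_of_lt_of_le ?_ hK
        have : (T * Q (-(q2 b z1 z2)) (q1 b z1 z2) * Q (-(q2 b y1 y2)) (q1 b y1 y2)).natDegree ≤ 9 :=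
          Polynomial.natDegree_mul_le_of_le (Polynomial.natDegree_mul_le_of_le dT (dQ _ _)) (dQ _ _)
        exact_mod_cast lt_of_le_of_lt this (by norm_num))
  rw [Polynomial.eval_mul, Polynomial.eval_mul, evT, evQ, evQ] at ht
  have k3 := right_ne_zero_of_mul ht
  have k1 := left_ne_zero_of_mul (left_ne_zero_of_mul ht)
  have k2 := right_ne_zero_of_mul (left_ne_zero_of_mul ht)
  refine h2 t 1 y1 y2 (by simp) (h2 z1 z2 t 1 hz hYz hth k2) k1 ?_
  intro h0
  apply k3
  unfold bf at h0 ⊢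
  linear_combination -h0

end core
end SkewAux

namespace SkewAux
open MvPolynomial CubicSurf

section form
variable {K : Type*} [Field K]

lemma monomial_three (d : Fin 4 →₀ ℕ) (hd : d.degree = 3) (r : K) :
    ∃ i j k, monomial d r = C r * X i * X j * X k := by
  have hc : (Finsupp.toMultiset d).card = 3 := by
    rw [Finsupp.card_toMultiset, ← hd, Finsupp.degree, Finsupp.sum]; rfl
  obtain ⟨i, j, k, h⟩ := Multiset.card_eq_three.mp hc
  refine ⟨i, j, k, ?_⟩
  have hd' : d = Finsupp.single i 1 + Finsupp.single j 1 + Finsupp.single k 1 := by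
    apply Multiset.toFinsupp.symm.injective
    change Finsupp.toMultiset d = Finsupp.toMultiset _
    rw [h]
    simp [Finsupp.toMultiset_single, ← Multiset.singleton_add, add_assoc]
  rw [hd']
  simp only [X, C_mul_monomial, monomial_mul, mul_one]

/-- A cubic form is given by a trilinear array. -/
lemma exists_tensor (F : MvPolynomial (Fin 4) K) (hF : F.IsHomogeneous 3) :
    ∃ c : Fin 4 → Fin 4 → Fin 4 → K, F = ∑ i, ∑ j, ∑ k, C (c i j k) * X i * X j * X k := by
  classical
  have key : ∀ s : Finset (Fin 4 →₀ ℕ), (∀ d ∈ s, d.degree = 3) → ∀ r : (Fin 4 →₀ ℕ) → K,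
      ∃ c : Fin 4 → Fin 4 → Fin 4 → K,
        ∑ d ∈ s, monomial d (r d) = ∑ i, ∑ j, ∑ k, C (c i j k) * X i * X j * X k := by
    intro s
    induction s using Finset.induction_on with
    | empty => intro _ r; exact ⟨fun _ _ _ => 0, by simp⟩
    | insert d s hds ih =>
      intro hs r
      obtain ⟨c, hc⟩ := ih (fun e he => hs e (Finset.mem_insert_of_mem he)) r
      obtain ⟨i, j, k, h⟩ := monomial_three d (hs d (Finset.mem_insert_self d s)) (r d)
      refine ⟨fun i' j' k' => (if i' = i then if j' = j then if k' = k then r d else 0 else 0 else 0)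
        + c i' j' k', ?_⟩
      rw [Finset.sum_insert hds, hc, h]
      simp only [C_add, add_mul, Finset.sum_add_distrib]
      congr 1
      rw [Finset.sum_eq_single i, Finset.sum_eq_single j, Finset.sum_eq_single k] <;>
        simp +contextual
  obtain ⟨c, hc⟩ := key F.support (fun d hd => by
    have := hF (mem_support_iff.mp hd)
    rw [Finsupp.degree_eq_weight_one (R := ℕ)]
    exact this) (fun d => coeff d F)
  exact ⟨c, by rw [← hc]; exact F.as_sum⟩

lemma cubic_zero {p q r s : K} (h : Polynomial.C p * Polynomial.X ^ 3 +
    Polynomial.C q * Polynomial.X ^ 2 + Polynomial.C r * Polynomial.X + Polynomial.C s = 0) :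
    p = 0 ∧ q = 0 ∧ r = 0 ∧ s = 0 := by
  have c0 := congrArg (fun p => Polynomial.coeff p 0) h
  have c1 := congrArg (fun p => Polynomial.coeff p 1) h
  have c2 := congrArg (fun p => Polynomial.coeff p 2) h
  have c3 := congrArg (fun p => Polynomial.coeff p 3) h
  simp [Polynomial.coeff_X, Polynomial.coeff_C, Polynomial.coeff_X_pow] at c0 c1 c2 c3
  exact ⟨c3, c2, c1, c0⟩

/-- The linear forms dual to the basis. -/
def nf (N : Matrix (Fin 4) (Fin 4) K) (j : Fin 4) : MvPolynomial (Fin 4) K :=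
  ∑ l, X l * C (N l j)

lemma exists_form (F : MvPolynomial (Fin 4) K) (hF : F.IsHomogeneous 3)
    (M N : Matrix (Fin 4) (Fin 4) K) (hNM : N * M = 1)
    (h01 : lineRestrict F (M 0) (M 1) = 0) (h23 : lineRestrict F (M 2) (M 3) = 0) :
    ∃ a b : Fin 6 → K, F = bf (fun i => C (a i)) (nf N 0) (nf N 1) (nf N 2) (nf N 3)
      + bf (fun i => C (b i)) (nf N 2) (nf N 3) (nf N 0) (nf N 1) := by
  set G : MvPolynomial (Fin 4) K := aeval (fun i => ∑ j, X j * C (M j i)) F with hG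
  have hGh : G.IsHomogeneous 3 := by
    have := hF.aeval (fun i => ∑ j, (X j * C (M j i) : MvPolynomial (Fin 4) K)) (n := 1) (by
      intro i
      refine IsHomogeneous.sum _ _ _ fun j _ => ?_
      simpa using (isHomogeneous_X K j).mul (isHomogeneous_C _ (M j i)))
    rw [one_mul] at this
    exact this
  obtain ⟨g, hg⟩ := exists_tensor G hGh
  have hFG : F = aeval (nf N) G := by
    have : (aeval (nf N)).comp (aeval (fun i => ∑ j, X j * C (M j i))) =
        AlgHom.id K (MvPolynomial (Fin 4) K) := by
      apply MvPolynomial.algHom_ext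
      intro i
      have hcol : ∀ l, ∑ j, N l j * M j i = if l = i then 1 else 0 := by
        intro l
        have := congrFun (congrFun hNM l) i
        rwa [Matrix.mul_apply, Matrix.one_apply] at this
      simp only [AlgHom.coe_comp, Function.comp_apply, aeval_X, map_sum, map_mul, AlgHom.coe_id, id,
        nf, algHom_C, Finset.sum_mul, algebraMap_eq]
      rw [Finset.sum_comm]
      have : ∀ l, ∑ j, (X l * C (N l j) * C (M j i) : MvPolynomial (Fin 4) K)
          = X l * C (if l = i then 1 else 0) := by
        intro l
        rw [← hcol l, map_sum, Finset.mul_sum]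
        refine Finset.sum_congr rfl fun j _ => ?_
        rw [C_mul, mul_assoc]
      simp [this]
    have := congrArg (fun φ => φ F) this
    simpa [hG] using this.symm
  have res : ∀ u v : Fin 4 → Polynomial K, ∀ j0 j1 : Fin 4,
      (∀ i, u i = if i = j0 then Polynomial.X else if i = j1 then 1 else 0) → j0 ≠ j1 →
      lineRestrict F (M j0) (M j1) = 0 → aeval u G = 0 := by
    intro u _ j0 j1 hu hj h
    have h' := congrArg (aeval (![Polynomial.X, 1] : Fin 2 → Polynomial K)) h
    rw [map_zero] at h'
    rw [← h', hG, lineRestrict]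
    rw [← AlgHom.comp_apply, ← AlgHom.comp_apply]
    congr 1
    apply MvPolynomial.algHom_ext
    intro i
    simp only [AlgHom.comp_apply, aeval_X, map_sum, map_mul, map_add, algHom_C, hu]
    rw [Finset.sum_eq_add j0 j1 hj]
    · rw [if_pos rfl, if_neg hj.symm, if_pos rfl]
      simp only [Matrix.cons_val_zero, Matrix.cons_val_one, one_mul, mul_comm]
    · rintro c _ ⟨hc0, hc1⟩; simp [hc0, hc1]
    · simp
    · simp
  have e01 := res ![Polynomial.X, 1, 0, 0] 0 0 1 (by intro i; fin_cases i <;> simp) (by decide) h01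
  have e23 := res ![0, 0, Polynomial.X, 1] 0 2 3 (by intro i; fin_cases i <;> simp) (by decide) h23
  rw [hg] at e01 e23
  simp [Fin.sum_univ_four, algHom_C] at e01 e23
  obtain ⟨p1, p2, p3, p4⟩ := cubic_zero (p := g 0 0 0) (q := g 0 0 1 + g 0 1 0 + g 1 0 0)
    (r := g 0 1 1 + g 1 0 1 + g 1 1 0) (s := g 1 1 1) (by
      simp only [map_add]; linear_combination e01)
  obtain ⟨r1, r2, r3, r4⟩ := cubic_zero (p := g 2 2 2) (q := g 2 2 3 + g 2 3 2 + g 3 2 2)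
    (r := g 2 3 3 + g 3 2 3 + g 3 3 2) (s := g 3 3 3) (by
      simp only [map_add]; linear_combination e23)
  refine ⟨![g 0 0 2 + g 0 2 0 + g 2 0 0,
      g 0 1 2 + g 0 2 1 + g 1 0 2 + g 1 2 0 + g 2 0 1 + g 2 1 0,
      g 1 1 2 + g 1 2 1 + g 2 1 1,
      g 0 0 3 + g 0 3 0 + g 3 0 0,
      g 0 1 3 + g 0 3 1 + g 1 0 3 + g 1 3 0 + g 3 0 1 + g 3 1 0,
      g 1 1 3 + g 1 3 1 + g 3 1 1],
    ![g 2 2 0 + g 2 0 2 + g 0 2 2,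
      g 2 3 0 + g 2 0 3 + g 3 2 0 + g 3 0 2 + g 0 2 3 + g 0 3 2,
      g 3 3 0 + g 3 0 3 + g 0 3 3,
      g 2 2 1 + g 2 1 2 + g 1 2 2,
      g 2 3 1 + g 2 1 3 + g 3 2 1 + g 3 1 2 + g 1 2 3 + g 1 3 2,
      g 3 3 1 + g 3 1 3 + g 1 3 3], ?_⟩
  clear_value G
  rw [hg] at hFG
  simp only [Fin.sum_univ_four, map_add, map_mul, aeval_X, algHom_C, algebraMap_eq] at hFG
  refine hFG.trans ?_
  clear hFG hg hG e01 e23 res hGh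
  have c1 := congrArg (C : K → MvPolynomial (Fin 4) K) p1
  have c2 := congrArg (C : K → MvPolynomial (Fin 4) K) p2
  have c3 := congrArg (C : K → MvPolynomial (Fin 4) K) p3
  have c4 := congrArg (C : K → MvPolynomial (Fin 4) K) p4
  have d1 := congrArg (C : K → MvPolynomial (Fin 4) K) r1
  have d2 := congrArg (C : K → MvPolynomial (Fin 4) K) r2
  have d3 := congrArg (C : K → MvPolynomial (Fin 4) K) r3
  have d4 := congrArg (C : K → MvPolynomial (Fin 4) K) r4
  simp only [map_add, map_zero] at c1 c2 c3 c4 d1 d2 d3 d4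
  generalize nf N 0 = n0
  generalize nf N 1 = n1
  generalize nf N 2 = n2
  generalize nf N 3 = n3
  unfold bf q1 q2
  simp [-Matrix.cons_val_succ]
  linear_combination n0 ^ 3 * c1 + n0 ^ 2 * n1 * c2 + n0 * n1 ^ 2 * c3 + n1 ^ 3 * c4
    + n2 ^ 3 * d1 + n2 ^ 2 * n3 * d2 + n2 * n3 ^ 2 * d3 + n3 ^ 3 * d4

end form
end SkewAux

namespace SkewAux
open MvPolynomial CubicSurf

section secant
variable {K : Type*} [Field K]

lemma eval_lineRestrict {n : ℕ} (F : MvPolynomial (Fin n) K) (u v : Fin n → K) (s t : K) :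
    eval (s • u + t • v) F = eval ![s, t] (lineRestrict F u v) := by
  unfold lineRestrict
  induction F using MvPolynomial.induction_on with
  | C c => simp
  | add p q hp hq => simp only [map_add, hp, hq]
  | mul_X p i hp =>
    simp only [map_mul, hp, aeval_X, eval_X, map_add, eval_C]
    simp [mul_comm]

lemma secant_mem {n : ℕ} {F : MvPolynomial (Fin n) K} (hF : F.IsHomogeneous 3)
    {B : Set (Projectivization K (Fin n → K))} {u v : Fin n → K}
    (hi : LinearIndependent K ![u, v]) {c : K} (hc : c ≠ 0) (l m : Fin 3 → K)
    (h : ∀ k, l k • u + m k • v ≠ 0)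
    (hr : lineRestrict F u v = C c * ∏ k : Fin 3, (C (m k) * X 0 - C (l k) * X 1))
    (hP : SpanMem F B (Projectivization.mk K _ (h 0)))
    (hQ : SpanMem F B (Projectivization.mk K _ (h 1))) :
    SpanMem F B (Projectivization.mk K _ (h 2)) := by
  have hu : u ∈ Submodule.span K (Set.range ![u, v]) := Submodule.subset_span ⟨0, rfl⟩
  have hv : v ∈ Submodule.span K (Set.range ![u, v]) := Submodule.subset_span ⟨1, rfl⟩
  refine SpanMem.secant _ _ _ (Submodule.span K (Set.range ![u, v])) ?_ ?_ hP hQ ?_ ?_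
  · unfold IsLine
    rw [finrank_span_eq_card hi, Fintype.card_fin]
  · intro hcon
    have h0 := hcon u v hu hv
    rw [hr] at h0
    rcases mul_eq_zero.mp h0 with h1 | h1
    · exact hc (C_eq_zero.mp h1)
    · obtain ⟨k, _, hk⟩ := Finset.prod_eq_zero_iff.mp h1
      apply h k
      have e1 := congrArg (eval (![1, 0] : Fin 2 → K)) hk
      have e2 := congrArg (eval (![0, 1] : Fin 2 → K)) hk
      simp at e1 e2
      simp [e1, e2]
  · apply mk_mem_zeroSet hF
    rw [eval_lineRestrict, hr]
    simp only [map_mul, map_prod, map_sub, eval_C, eval_X]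
    have : ∏ k : Fin 3, (m k * (![l 2, m 2] : Fin 2 → K) 0 - l k * (![l 2, m 2] : Fin 2 → K) 1)
        = 0 := by
      apply Finset.prod_eq_zero (Finset.mem_univ 2)
      simp [mul_comm]
    rw [this, mul_zero]
  · exact ⟨u, v, hu, hv, hi, c, l, m, h, hc, hr, rfl, rfl, rfl⟩

end secant

section coords
open Matrix
variable {K : Type*} [Field K]

/-- The surface equation in coordinates adapted to the two lines. -/
structure Frm (F : MvPolynomial (Fin 4) K) (M N : Matrix (Fin 4) (Fin 4) K)
    (a b : Fin 6 → K) : Prop where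
  hom : F.IsHomogeneous 3
  hNM : N * M = 1
  hMN : M * N = 1
  hf : F = bf (fun i => C (a i)) (nf N 0) (nf N 1) (nf N 2) (nf N 3)
      + bf (fun i => C (b i)) (nf N 2) (nf N 3) (nf N 0) (nf N 1)

/-- The point with coordinates `w` in the adapted basis is in the span. -/
def Sp (F : MvPolynomial (Fin 4) K) (B : Set (Projectivization K (Fin 4 → K)))
    (M : Matrix (Fin 4) (Fin 4) K) (w : Fin 4 → K) : Prop :=
  ∃ h : w ᵥ* M ≠ 0, SpanMem F B (Projectivization.mk K (w ᵥ* M) h)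

variable {F : MvPolynomial (Fin 4) K} {M N : Matrix (Fin 4) (Fin 4) K} {a b : Fin 6 → K}
  {B : Set (Projectivization K (Fin 4 → K))}

lemma Sp.smul {w : Fin 4 → K} (h : Sp F B M w) {c : K} (hc : c ≠ 0) : Sp F B M (c • w) := by
  obtain ⟨h0, h1⟩ := h
  have hne : (c • w) ᵥ* M ≠ 0 := by
    rw [smul_vecMul]; exact smul_ne_zero hc h0
  refine ⟨hne, ?_⟩
  have : Projectivization.mk K ((c • w) ᵥ* M) hne = Projectivization.mk K (w ᵥ* M) h0 := by
    rw [Projectivization.mk_eq_mk_iff']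
    exact ⟨c, (smul_vecMul c w M).symm⟩
  rw [this]; exact h1

lemma Frm.inj (H : Frm F M N a b) {w : Fin 4 → K} (h : w ᵥ* M = 0) : w = 0 := by
  have := congrArg (fun v => v ᵥ* N) h
  simpa [vecMul_vecMul, H.hMN] using this

lemma Frm.coord (H : Frm F M N a b) (w : Fin 4 → K) (j : Fin 4) :
    ∑ l, (w ᵥ* M) l * N l j = w j := by
  have : (w ᵥ* M) ᵥ* N = w := by rw [vecMul_vecMul, H.hMN, vecMul_one]
  exact congrFun this j

lemma Frm.lr (H : Frm F M N a b) (w w' : Fin 4 → K) :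
    lineRestrict F (w ᵥ* M) (w' ᵥ* M) =
      bf (fun i => C (a i)) (C (w 0) * X 0 + C (w' 0) * X 1) (C (w 1) * X 0 + C (w' 1) * X 1)
        (C (w 2) * X 0 + C (w' 2) * X 1) (C (w 3) * X 0 + C (w' 3) * X 1)
      + bf (fun i => C (b i)) (C (w 2) * X 0 + C (w' 2) * X 1) (C (w 3) * X 0 + C (w' 3) * X 1)
        (C (w 0) * X 0 + C (w' 0) * X 1) (C (w 1) * X 0 + C (w' 1) * X 1) := by
  have hn : ∀ j, aeval (fun i => C ((w ᵥ* M) i) * X 0 + C ((w' ᵥ* M) i) * X 1) (nf N j)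
      = (C (w j) * X 0 + C (w' j) * X 1 : MvPolynomial (Fin 2) K) := by
    intro j
    rw [← H.coord w j, ← H.coord w' j]
    simp only [nf, map_sum, map_mul, aeval_X, algHom_C, algebraMap_eq, Finset.sum_mul]
    rw [← Finset.sum_add_distrib]
    refine Finset.sum_congr rfl fun l _ => ?_
    ring
  unfold lineRestrict
  conv_lhs => rw [H.hf]
  rw [map_add]
  simp only [bf, q1, q2, map_add, map_mul, map_pow, hn, algHom_C, algebraMap_eq]

lemma Frm.sec (H : Frm F M N a b) {w w' : Fin 4 → K}
    (hi : ∀ s t : K, s • w + t • w' = 0 → s = 0 ∧ t = 0) {c : K} (hc : c ≠ 0) (l m : Fin 3 → K)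
    (hlm : ∀ k, ¬ (l k = 0 ∧ m k = 0))
    (hr : bf (fun i => C (a i)) (C (w 0) * X 0 + C (w' 0) * X 1) (C (w 1) * X 0 + C (w' 1) * X 1)
        (C (w 2) * X 0 + C (w' 2) * X 1) (C (w 3) * X 0 + C (w' 3) * X 1)
      + bf (fun i => C (b i)) (C (w 2) * X 0 + C (w' 2) * X 1) (C (w 3) * X 0 + C (w' 3) * X 1)
        (C (w 0) * X 0 + C (w' 0) * X 1) (C (w 1) * X 0 + C (w' 1) * X 1)
      = (C c * ∏ k : Fin 3, (C (m k) * X 0 - C (l k) * X 1) : MvPolynomial (Fin 2) K))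
    (hP : Sp F B M (l 0 • w + m 0 • w')) (hQ : Sp F B M (l 1 • w + m 1 • w')) :
    Sp F B M (l 2 • w + m 2 • w') := by
  have hv : ∀ s t : K, (s • w + t • w') ᵥ* M = s • (w ᵥ* M) + t • (w' ᵥ* M) := by
    intro s t; rw [add_vecMul, smul_vecMul, smul_vecMul]
  have h : ∀ k, l k • (w ᵥ* M) + m k • (w' ᵥ* M) ≠ 0 := by
    intro k hk
    rw [← hv] at hk
    exact hlm k (hi _ _ (H.inj hk))
  have hI : LinearIndependent K ![w ᵥ* M, w' ᵥ* M] := by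
    rw [LinearIndependent.pair_iff]
    intro s t hst
    rw [← hv] at hst
    exact hi _ _ (H.inj hst)
  obtain ⟨h0, hP⟩ := hP
  obtain ⟨h1, hQ⟩ := hQ
  simp only [hv] at hP hQ
  have := secant_mem H.hom hI hc l m h ((H.lr w w').trans hr) hP hQ
  refine ⟨by rw [hv]; exact h 2, ?_⟩
  simp only [hv]
  exact this

/-- The third point on the line through a point of the first line and the point
`B x - A y` is `y`. -/
lemma Frm.rule1 (H : Frm F M N a b) {x1 x2 y1 y2 : K} (hx : ¬ (x1 = 0 ∧ x2 = 0))
    (hy : ¬ (y1 = 0 ∧ y2 = 0)) (hne : ¬ (bf b y1 y2 x1 x2 = 0 ∧ bf a x1 x2 y1 y2 = 0))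
    (h0 : Sp F B M ![x1, x2, 0, 0])
    (hR : Sp F B M ![bf b y1 y2 x1 x2 * x1, bf b y1 y2 x1 x2 * x2,
      -(bf a x1 x2 y1 y2 * y1), -(bf a x1 x2 y1 y2 * y2)]) :
    Sp F B M ![0, 0, y1, y2] := by
  have key := H.sec (B := B) (w := ![x1, x2, 0, 0]) (w' := ![0, 0, y1, y2]) (c := 1) ?_ one_ne_zero
    ![1, bf b y1 y2 x1 x2, 0] ![0, -(bf a x1 x2 y1 y2), 1] ?_ ?_ ?_ ?_
  · simpa using key
  · intro s t h
    have e0 := congrFun h 0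
    have e1 := congrFun h 1
    have e2 := congrFun h 2
    have e3 := congrFun h 3
    simp at e0 e1 e2 e3
    constructor
    · by_contra hs
      exact hx ⟨e0.resolve_left hs, e1.resolve_left hs⟩
    · by_contra hs
      exact hy ⟨e2.resolve_left hs, e3.resolve_left hs⟩
  · intro k
    fin_cases k <;> simp
    simpa using hne
  · simp [Fin.prod_univ_three, bf, q1, q2]
    ring
  · simpa using h0
  · have : (![bf b y1 y2 x1 x2 * x1, bf b y1 y2 x1 x2 * x2,
      -(bf a x1 x2 y1 y2 * y1), -(bf a x1 x2 y1 y2 * y2)] : Fin 4 → K) =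
      (![1, bf b y1 y2 x1 x2, 0] : Fin 3 → K) 1 • ![x1, x2, 0, 0]
      + (![0, -(bf a x1 x2 y1 y2), 1] : Fin 3 → K) 1 • ![0, 0, y1, y2] := by
      funext i; fin_cases i <;> simp
    rw [← this]; exact hR

/-- The tangent step. -/
lemma Frm.rule2 (H : Frm F M N a b) {x1 x2 y1 y2 z1 z2 : K} (hx : ¬ (x1 = 0 ∧ x2 = 0))
    (hz : ¬ (z1 = 0 ∧ z2 = 0)) (hzx : bf b z1 z2 x1 x2 = 0) {al be e : K}
    (hal : bf a x1 x2 y1 y2 = al) (hbe : bf b y1 y2 x1 x2 = be) (hbe0 : be ≠ 0)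
    (he : e = be * bf a x1 x2 z1 z2 -
      al * (x1 * (2 * b 0 * y1 * z1 + b 1 * (y1 * z2 + y2 * z1) + 2 * b 2 * y2 * z2)
        + x2 * (2 * b 3 * y1 * z1 + b 4 * (y1 * z2 + y2 * z1) + 2 * b 5 * y2 * z2)))
    (he0 : e ≠ 0) (h0 : Sp F B M ![0, 0, z1, z2]) :
    Sp F B M ![be * x1, be * x2, -(al * y1), -(al * y2)] := by
  have key := H.sec (B := B) (w := ![be * x1, be * x2, -(al * y1), -(al * y2)])
    (w' := ![0, 0, z1, z2]) (c := -(be * e)) ?_ (neg_ne_zero.mpr (mul_ne_zero hbe0 he0))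
    ![0, 0, 1] ![1, 1, 0] ?_ ?_ ?_ ?_
  · simpa using key
  · intro s t h
    have e0 := congrFun h 0
    have e1 := congrFun h 1
    have e2 := congrFun h 2
    have e3 := congrFun h 3
    simp [hbe0] at e0 e1 e2 e3
    have hs : s = 0 := by
      by_contra hs
      exact hx ⟨e0.resolve_left hs, e1.resolve_left hs⟩
    refine ⟨hs, ?_⟩
    subst hs
    simp at e2 e3
    by_contra hs
    exact hz ⟨e2.resolve_left hs, e3.resolve_left hs⟩
  · intro k
    fin_cases k <;> simp
  · have c1 := congrArg (C : K → MvPolynomial (Fin 2) K) hzx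
    have c2 := congrArg (C : K → MvPolynomial (Fin 2) K) hal
    have c3 := congrArg (C : K → MvPolynomial (Fin 2) K) hbe
    have c4 := congrArg (C : K → MvPolynomial (Fin 2) K) he
    have two : (C (2 : K) : MvPolynomial (Fin 2) K) = 2 := map_ofNat C 2
    simp only [bf, q1, q2, map_add, map_mul, map_pow, map_zero, map_sub, two] at c1 c2 c3 c4
    simp [Fin.prod_univ_three, bf, q1, q2, -neg_mul]
    generalize (X 0 : MvPolynomial (Fin 2) K) = S at *
    generalize (X 1 : MvPolynomial (Fin 2) K) = T at *
    linear_combination C be * S * T ^ 2 * c1 - C be ^ 2 * C al * S ^ 3 * c2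
      + C al ^ 2 * C be * S ^ 3 * c3 - C be * S ^ 2 * T * c4
  · simpa using h0
  · simpa using h0

end coords

section smooth
variable {L : Type*} [Field L]

lemma sing (a b : Fin 6 → L) (p0 p1 p2 p3 : MvPolynomial (Fin 4) L) (v : Fin 4 → L)
    (h2 : eval v p2 = 0) (h3 : eval v p3 = 0) (hq1 : q1 a (eval v p0) (eval v p1) = 0)
    (hq2 : q2 a (eval v p0) (eval v p1) = 0) :
    eval v (bf (fun i => C (a i)) p0 p1 p2 p3 + bf (fun i => C (b i)) p2 p3 p0 p1) = 0 ∧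
    ∀ i, eval v (pderiv i (bf (fun i => C (a i)) p0 p1 p2 p3
      + bf (fun i => C (b i)) p2 p3 p0 p1)) = 0 := by
  constructor
  · simp [bf, q1, q2, h2, h3]
  · intro i
    unfold q1 at hq1
    unfold q2 at hq2
    simp [bf, q1, q2, h2, h3, Derivation.leibniz, Derivation.leibniz_pow]
    linear_combination eval v (pderiv i p2) * hq1 + eval v (pderiv i p3) * hq2

end smooth
end SkewAux

namespace SkewAux
open MvPolynomial CubicSurf Matrix

section final
variable {K : Type*} [Field K]
variable {F : MvPolynomial (Fin 4) K} {M N : Matrix (Fin 4) (Fin 4) K} {a b : Fin 6 → K}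

lemma map_form {L : Type*} [Field L] (f : K →+* L) (a : Fin 6 → K)
    (p0 p1 p2 p3 : MvPolynomial (Fin 4) K) :
    MvPolynomial.map f (bf (fun i => C (a i)) p0 p1 p2 p3) =
      bf (fun i => C (f (a i))) (MvPolynomial.map f p0) (MvPolynomial.map f p1)
        (MvPolynomial.map f p2) (MvPolynomial.map f p3) := by
  simp [bf, q1, q2]

lemma Frm.nc (H : Frm F M N a b) (hs : IsSmoothHypersurf F) :
    NC (fun i => algebraMap K (AlgebraicClosure K) (a i)) ∧
    NC (fun i => algebraMap K (AlgebraicClosure K) (b i)) := by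
  set f := algebraMap K (AlgebraicClosure K) with hf
  have hMN : M.map f * N.map f = 1 := by
    rw [← Matrix.map_mul, H.hMN, Matrix.map_one _ (map_zero f) (map_one f)]
  have hev : ∀ (w : Fin 4 → AlgebraicClosure K) (j : Fin 4),
      eval (w ᵥ* M.map f) (MvPolynomial.map f (nf N j)) = w j := by
    intro w j
    have : (w ᵥ* M.map f) ᵥ* N.map f = w := by rw [vecMul_vecMul, hMN, vecMul_one]
    have h2 := congrFun this j
    rw [← h2]
    simp only [nf, map_sum, map_mul, map_X, map_C, eval_X, eval_C]
    rfl
  have hinj : ∀ w : Fin 4 → AlgebraicClosure K, w ᵥ* M.map f = 0 → w = 0 := by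
    intro w h
    have := congrArg (fun v => v ᵥ* N.map f) h
    simpa [vecMul_vecMul, hMN] using this
  have hF : MvPolynomial.map f F = bf (fun i => C (f (a i))) (MvPolynomial.map f (nf N 0))
      (MvPolynomial.map f (nf N 1)) (MvPolynomial.map f (nf N 2)) (MvPolynomial.map f (nf N 3))
      + bf (fun i => C (f (b i))) (MvPolynomial.map f (nf N 2)) (MvPolynomial.map f (nf N 3))
        (MvPolynomial.map f (nf N 0)) (MvPolynomial.map f (nf N 1)) := by
    conv_lhs => rw [H.hf]
    rw [map_add, map_form, map_form]
  constructor
  · intro x y h1 h2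
    obtain ⟨s1, s2⟩ := sing (fun i => f (a i)) (fun i => f (b i)) (MvPolynomial.map f (nf N 0))
      (MvPolynomial.map f (nf N 1)) (MvPolynomial.map f (nf N 2)) (MvPolynomial.map f (nf N 3))
      (![x, y, 0, 0] ᵥ* M.map f) (by rw [hev]; rfl) (by rw [hev]; rfl)
      (by rw [hev, hev]; exact h1) (by rw [hev, hev]; exact h2)
    rw [← hF] at s1
    rw [← hF] at s2
    have := hinj _ (hs _ s1 s2)
    exact ⟨congrFun this 0, congrFun this 1⟩
  · intro x y h1 h2
    obtain ⟨s1, s2⟩ := sing (fun i => f (b i)) (fun i => f (a i)) (MvPolynomial.map f (nf N 2))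
      (MvPolynomial.map f (nf N 3)) (MvPolynomial.map f (nf N 0)) (MvPolynomial.map f (nf N 1))
      (![0, 0, x, y] ᵥ* M.map f) (by rw [hev]; rfl) (by rw [hev]; rfl)
      (by rw [hev, hev]; exact h1) (by rw [hev, hev]; exact h2)
    rw [add_comm, ← hF] at s1
    rw [add_comm, ← hF] at s2
    have := hinj _ (hs _ s1 s2)
    exact ⟨congrFun this 2, congrFun this 3⟩

lemma Frm.all {B : Set (Projectivization K (Fin 4 → K))} (H : Frm F M N a b)
    (hs : IsSmoothHypersurf F) (hK : 13 ≤ Cardinal.mk K)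
    (hB : ∀ x1 x2, ¬ (x1 = 0 ∧ x2 = 0) → Sp F B M ![x1, x2, 0, 0])
    (y1 y2 : K) (hy : ¬ (y1 = 0 ∧ y2 = 0)) : Sp F B M ![0, 0, y1, y2] := by
  obtain ⟨ha, hb⟩ := H.nc hs
  refine core hK a b ha hb (fun y1 y2 => Sp F B M ![0, 0, y1, y2]) ?_ ?_ y1 y2 hy
  · intro x1 x2 y1 y2 hy hA hB0
    have hx : ¬ (x1 = 0 ∧ x2 = 0) := by
      rintro ⟨rfl, rfl⟩
      exact hB0 (by simp [bf])
    refine H.rule1 hx hy (fun h => hB0 h.1) (hB x1 x2 hx) ?_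
    have := (hB x1 x2 hx).smul hB0
    simpa [hA] using this
  · intro z1 z2 y1 y2 hz hY hth hbe
    have hb' : NC b := NC_down _ hb
    have hzx : bf b z1 z2 (-(q2 b z1 z2)) (q1 b z1 z2) = 0 := by unfold bf; ring
    have hx : ¬ (-(q2 b z1 z2) = 0 ∧ q1 b z1 z2 = 0) := by
      rintro ⟨h1, h2⟩
      exact hz (hb' z1 z2 h2 (neg_eq_zero.mp h1))
    have hD : y1 * z2 - y2 * z1 ≠ 0 := by
      intro h
      by_cases h1 : z1 = 0
      · have h2 : z2 ≠ 0 := fun h2 => hz ⟨h1, h2⟩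
        have hy1 : y1 = 0 := by
          rw [h1, mul_zero, sub_zero] at h
          exact (mul_eq_zero.mp h).resolve_right h2
        apply hbe
        subst h1 hy1
        unfold bf q1 q2; ring
      · apply hbe
        have h3 : y2 = y1 / z1 * z2 := by
          field_simp; linear_combination -h
        have h4 : y1 = y1 / z1 * z1 := by field_simp
        generalize y1 / z1 = t at h3 h4
        subst h3 h4
        unfold bf q1 q2; ring
    have hy : ¬ (y1 = 0 ∧ y2 = 0) := by
      rintro ⟨rfl, rfl⟩
      exact hD (by ring)
    refine H.rule1 hx hy (fun h => hbe h.1) (hB _ _ hx) ?_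
    refine H.rule2 hx hz hzx rfl rfl hbe rfl ?_ hY
    intro h
    have : th a b z1 z2 * (y1 * z2 - y2 * z1) ^ 2 = 0 := by
      unfold th
      unfold bf at h
      generalize hg1 : q1 a (-(q2 b z1 z2)) (q1 b z1 z2) = g1 at h ⊢
      generalize hg2 : q2 a (-(q2 b z1 z2)) (q1 b z1 z2) = g2 at h ⊢
      unfold q1 q2 at h
      unfold bz
      linear_combination h
    exact (mul_ne_zero hth (pow_ne_zero 2 hD)) this

theorem main (hK : 13 ≤ Cardinal.mk K)
    (F : MvPolynomial (Fin 4) K) (hF : SmoothCubic F)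
    (W W' : Submodule K (Fin 4 → K))
    (hl : IsLine W) (hl' : IsLine W')
    (hS : LineOnSurf F W) (hS' : LineOnSurf F W')
    (hskew : W ⊓ W' = ⊥) :
    linePts W' ⊆ Span F (linePts W) := by
  let e := Module.finBasisOfFinrankEq K W hl
  let e' := Module.finBasisOfFinrankEq K W' hl'
  let M : Matrix (Fin 4) (Fin 4) K := ![(e 0 : Fin 4 → K), e 1, e' 0, e' 1]
  have hM : ∀ w : Fin 4 → K, w ᵥ* M = ((w 0 • e 0 + w 1 • e 1 : W) : Fin 4 → K)
      + ((w 2 • e' 0 + w 3 • e' 1 : W') : Fin 4 → K) := by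
    intro w
    funext i
    simp [vecMul, dotProduct, Fin.sum_univ_four, M, add_assoc]
  have lin : ∀ s t : K, s • e 0 + t • e 1 = 0 → s = 0 ∧ t = 0 := by
    intro s t h
    have := Fintype.linearIndependent_iff.mp e.linearIndependent ![s, t]
      (by simpa [Fin.sum_univ_two] using h)
    exact ⟨this 0, this 1⟩
  have lin' : ∀ s t : K, s • e' 0 + t • e' 1 = 0 → s = 0 ∧ t = 0 := by
    intro s t h
    have := Fintype.linearIndependent_iff.mp e'.linearIndependent ![s, t]
      (by simpa [Fin.sum_univ_two] using h)
    exact ⟨this 0, this 1⟩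
  have inj : ∀ w : Fin 4 → K, w ᵥ* M = 0 → w = 0 := by
    intro w h
    rw [hM] at h
    set p : W := w 0 • e 0 + w 1 • e 1 with hp
    set q : W' := w 2 • e' 0 + w 3 • e' 1 with hq
    have hpq : (p : Fin 4 → K) = -(q : Fin 4 → K) := eq_neg_of_add_eq_zero_left h
    have hmem : (p : Fin 4 → K) ∈ W ⊓ W' :=
      ⟨p.2, by rw [hpq]; exact W'.neg_mem q.2⟩
    rw [hskew, Submodule.mem_bot] at hmem
    have hq0 : (q : Fin 4 → K) = 0 := by rw [hmem] at hpq; exact neg_eq_zero.mp hpq.symm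
    have h1 := lin _ _ (Subtype.ext hmem : p = 0)
    have h2 := lin' _ _ (Subtype.ext hq0 : q = 0)
    funext i
    fin_cases i
    · exact h1.1
    · exact h1.2
    · exact h2.1
    · exact h2.2
  have hu : IsUnit M := by
    rw [← Matrix.vecMul_injective_iff_isUnit]
    intro w w' h
    have := inj (w - w') (by rw [sub_vecMul]; exact sub_eq_zero.mpr h)
    exact sub_eq_zero.mp this
  have hdet := (Matrix.isUnit_iff_isUnit_det M).mp hu
  have hMN : M * M⁻¹ = 1 := Matrix.mul_nonsing_inv M hdet
  have hNM : M⁻¹ * M = 1 := Matrix.nonsing_inv_mul M hdet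
  obtain ⟨a, b, hf⟩ := exists_form F hF.1 M M⁻¹ hNM
    (hS _ _ (e 0).2 (e 1).2) (hS' _ _ (e' 0).2 (e' 1).2)
  have H : Frm F M M⁻¹ a b := ⟨hF.1, hNM, hMN, hf⟩
  have hB : ∀ x1 x2, ¬ (x1 = 0 ∧ x2 = 0) → Sp F (linePts W) M ![x1, x2, 0, 0] := by
    intro x1 x2 hx
    have hne : (![x1, x2, 0, 0] : Fin 4 → K) ᵥ* M ≠ 0 := by
      intro h
      have := inj _ h
      exact hx ⟨congrFun this 0, congrFun this 1⟩
    refine ⟨hne, SpanMem.base _ ?_⟩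
    change (Projectivization.mk K _ hne).rep ∈ W
    obtain ⟨c, hc⟩ := Projectivization.exists_smul_eq_mk_rep K _ hne
    rw [← hc, Units.smul_def]
    apply W.smul_mem
    rw [hM]
    apply W.add_mem (Subtype.property _)
    simp
  intro P hP
  have hPW : P.rep ∈ W' := hP
  have hrepr := e'.sum_repr ⟨P.rep, hPW⟩
  rw [Fin.sum_univ_two] at hrepr
  set y1 := e'.repr ⟨P.rep, hPW⟩ 0
  set y2 := e'.repr ⟨P.rep, hPW⟩ 1
  have hv : (![0, 0, y1, y2] : Fin 4 → K) ᵥ* M = P.rep := by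
    rw [hM]
    have := congrArg (Subtype.val) hrepr
    simpa using this
  have hy : ¬ (y1 = 0 ∧ y2 = 0) := by
    rintro ⟨h1, h2⟩
    apply P.rep_nonzero
    rw [← hv, h1, h2]
    have : (![0, 0, 0, 0] : Fin 4 → K) = 0 := by funext i; fin_cases i <;> rfl
    rw [this, zero_vecMul]
  obtain ⟨h0, h1⟩ := H.all hF.2 hK hB y1 y2 hy
  have : Projectivization.mk K _ h0 = P := by
    simp only [hv]
    exact P.mk_rep
  rw [this] at h1
  exact h1

end final
end SkewAux

open CubicSurf MvPolynomial in
/-- Let `K` be a field with at least 13 elements and `S` a smooth cubic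
surface over `K` containing two skew `K`-lines `ℓ` and `ℓ'`. Then
`ℓ'(K) ⊆ Span(ℓ(K))`. -/
theorem skew_line_spanned_by_other_line
    {K : Type*} [Field K] (hK : 13 ≤ Cardinal.mk K)
    (F : MvPolynomial (Fin 4) K) (hF : SmoothCubic F)
    (W W' : Submodule K (Fin 4 → K))
    (hl : IsLine W) (hl' : IsLine W')
    (hS : LineOnSurf F W) (hS' : LineOnSurf F W')
    (hskew : W ⊓ W' = ⊥) :
    linePts W' ⊆ Span F (linePts W) := by
  exact SkewAux.main hK F hF W W' hl hl' hS hS' hskew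
end
end
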